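/- arXiv:1204.0543 — 3 statements merged into one kernel-verified Lean document; each statement's English description precedes it below -/
import Mathlib

section
/- For every positive integer k and positive integers d₁, …, d_k there exists a constant C > 0 depending only on k and d₁ + ⋯ + d_k such that: for all polynomials pⁱ : ℝⁿ → ℝ of degree at most d_i (1 ≤ i ≤ k) and all 0 < ε < 1/2, Pr( ∏_{i=1}^k |pⁱ(X)| < ε·|det M| ) ≤ C·ε·(log(1/ε))^k, where X, Y¹, …, Y^k are independent standard Gaussian random vectors on ℝⁿ and M is the k×k matrix with entries M_{ij} = ⟨∇p^j(X), Yⁱ⟩. -/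
open MeasureTheory ProbabilityTheory

/-- The standard Gaussian measure on `ℝⁿ`. -/
noncomputable def stdGaussian (n : ℕ) : Measure (Fin n → ℝ) :=
  Measure.pi fun _ => gaussianReal 0 1

/-!
Consider the frame `z = (X, Y¹, …, Yᵏ)` of independent standard Gaussian vectors and reflect it in
the hyperplane orthogonal to `(1, t)`, where `t ∈ [0, 1]ᵏ`. This preserves the law of `z`. If
`(X_t, Y_t)` is the reflected frame, then `∂X_t / ∂tᵢ = -(2 / (1 + |t|²)) Y_tⁱ`, so the map
`q t = (p¹(X_t), …, pᵏ(X_t))` has Jacobian `-(2 / (1 + |t|²)) M(X_t, Y_t)ᵀ`. Averaging over `t`, it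
suffices to bound, for every fixed frame, the volume of `{t ∈ [0, 1]ᵏ | ∏ |qᵢ| < δ |det Dq|}`.

The map `q` is rational of bounded degree, hence boundedly-many-to-one at almost every point where
`det Dq ≠ 0`. Where all `|qᵢ|` lie in intervals `[aᵢ, bᵢ]`, the volume is at most
`δ ∫ |det Dq| / ∏ |qᵢ|`, and the area formula bounds this integral by a constant times
`∏ 2 log (bᵢ / aᵢ)`. Taking `bᵢ` to be the maximum of `|qᵢ|` and `aᵢ` a small multiple of it, the
remaining set, where some `|qᵢ| < aᵢ`, is small by a Remez-type inequality.
-/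

open scoped ENNReal Polynomial NNReal

theorem exists_separated_of_lt_measure {X : Type*} [PseudoMetricSpace X] [MeasurableSpace X]
    {μ : Measure X} {r : ℝ} {c : ℝ≥0∞} (hc : ∀ x, μ (Metric.ball x r) ≤ c) {A : Set X} (m : ℕ)
    (hA : m * c < μ A) :
    ∃ x : Fin (m + 1) → X, (∀ i, x i ∈ A) ∧ Pairwise fun i j => r ≤ dist (x i) (x j) := by
  induction m with
  | zero =>
    obtain ⟨y, hy⟩ := nonempty_of_measure_ne_zero (ne_bot_of_gt hA)
    exact ⟨fun _ => y, fun _ => hy, fun i j hij => (hij (Subsingleton.elim (α := Fin 1) i j)).elim⟩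
  | succ m ih =>
    obtain ⟨x, hxA, hx⟩ := ih (lt_of_le_of_lt (by gcongr; omega) hA)
    have hballs : μ (⋃ i, Metric.ball (x i) r) ≤ (m + 1 : ℕ) * c :=
      calc μ (⋃ i, Metric.ball (x i) r) ≤ ∑ i, μ (Metric.ball (x i) r) :=
            measure_iUnion_fintype_le _ _
        _ ≤ ∑ _i : Fin (m + 1), c := Finset.sum_le_sum fun i _ => hc (x i)
        _ = (m + 1 : ℕ) * c := by simp
    obtain ⟨y, hyA, hy⟩ :=
      Set.not_subset.1 fun h => (hA.trans_le (measure_mono h)).not_ge hballs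
    simp only [Set.mem_iUnion, Metric.mem_ball, not_exists, not_lt] at hy
    refine ⟨Fin.cons y x, Fin.cases hyA hxA, ?_⟩
    intro i j hij
    induction i using Fin.cases with
    | zero =>
      induction j using Fin.cases with
      | zero => exact (hij rfl).elim
      | succ j => exact hy j
    | succ i =>
      induction j using Fin.cases with
      | zero => simpa only [Fin.cons_succ, Fin.cons_zero, dist_comm] using hy i
      | succ j => exact hx fun h => hij (congrArg Fin.succ h)

theorem abs_eval_lagrangeBasis_le {ι : Type*} [DecidableEq ι] {s : Finset ι} {x : ι → ℝ} {r y : ℝ}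
    (hr : 0 < r) (hx : Pairwise fun i j => r ≤ |x i - x j|) (hy : ∀ i, |y - x i| ≤ 1)
    {i : ι} (hi : i ∈ s) : |(Lagrange.basis s x i).eval y| ≤ (r ^ (s.card - 1))⁻¹ := by
  rw [Lagrange.basis, Polynomial.eval_prod, Finset.abs_prod, ← Finset.card_erase_of_mem hi,
    ← inv_pow, ← Finset.prod_const]
  refine Finset.prod_le_prod (fun _ _ => abs_nonneg _) fun j hj => ?_
  have hij : r ≤ |x i - x j| := hx (Finset.ne_of_mem_erase hj).symm
  simp only [Lagrange.basisDivisor, Polynomial.eval_mul, Polynomial.eval_C, Polynomial.eval_sub,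
    Polynomial.eval_X, abs_mul, abs_inv]
  calc |x i - x j|⁻¹ * |y - x j| ≤ r⁻¹ * 1 := by gcongr; exact hy j
    _ = r⁻¹ := mul_one _

theorem exists_le_abs_eval_of_separated {p : ℝ[X]} {m : ℕ} (hp : p.natDegree ≤ m)
    {x : Fin (m + 1) → ℝ} {r y : ℝ} (hr : 0 < r) (hx : Pairwise fun i j => r ≤ |x i - x j|)
    (hy : ∀ i, |y - x i| ≤ 1) : ∃ i, r ^ m / (m + 1) * |p.eval y| ≤ |p.eval (x i)| := by
  by_contra! hlt
  have hinj : Function.Injective x := fun i j h => by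
    by_contra hij
    exact hr.not_ge (by simpa only [h, sub_self, abs_zero] using hx hij)
  have hdeg : p.degree < (Finset.univ : Finset (Fin (m + 1))).card := by
    rw [Finset.card_fin]
    exact Polynomial.degree_le_natDegree.trans_lt (by exact_mod_cast Nat.lt_succ_of_le hp)
  have hinterp : p.eval y =
      ∑ i, p.eval (x i) * (Lagrange.basis Finset.univ x i).eval y := by
    conv_lhs => rw [Lagrange.eq_interpolate hinj.injOn hdeg]
    simp [Lagrange.interpolate_apply, Polynomial.eval_finsetSum]
  have hbound : |p.eval y| < |p.eval y| :=
    calc |p.eval y| ≤ ∑ i, |p.eval (x i)| * |(Lagrange.basis Finset.univ x i).eval y| := by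
          simpa only [hinterp, abs_mul] using Finset.abs_sum_le_sum_abs
            (fun i => p.eval (x i) * (Lagrange.basis Finset.univ x i).eval y) Finset.univ
      _ ≤ ∑ i, |p.eval (x i)| * (r ^ m)⁻¹ := by
          gcongr with i
          simpa using abs_eval_lagrangeBasis_le (s := Finset.univ) hr hx hy (Finset.mem_univ i)
      _ < ∑ _i : Fin (m + 1), r ^ m / (m + 1) * |p.eval y| * (r ^ m)⁻¹ :=
          Finset.sum_lt_sum_of_nonempty Finset.univ_nonempty fun i _ => by gcongr; exact hlt i
      _ = |p.eval y| := by
          simp only [Finset.sum_const, Finset.card_univ, Fintype.card_fin, nsmul_eq_mul]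
          push_cast
          field_simp
  exact hbound.false

theorem volume_abs_eval_lt_le {p : ℝ[X]} {m : ℕ} (hp : p.natDegree ≤ m) {r y : ℝ} (hr : 0 < r)
    (hy : y ∈ Set.Icc (0 : ℝ) 1) :
    volume.restrict (Set.Icc 0 1) {x | |p.eval x| < r ^ m / (m + 1) * |p.eval y|} ≤
      ENNReal.ofReal (2 * m * r) := by
  rw [Measure.restrict_apply' measurableSet_Icc]
  by_contra! hlarge
  have hlarge' : m * ENNReal.ofReal (2 * r) <
      volume ({x | |p.eval x| < r ^ m / (m + 1) * |p.eval y|} ∩ Set.Icc 0 1) := by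
    refine lt_of_eq_of_lt ?_ hlarge
    rw [← ENNReal.ofReal_natCast, ← ENNReal.ofReal_mul m.cast_nonneg]
    ring_nf
  obtain ⟨x, hx, hsep⟩ :=
    exists_separated_of_lt_measure (fun x => (Real.volume_ball x r).le) m hlarge'
  obtain ⟨i, hi⟩ := exists_le_abs_eval_of_separated hp hr hsep fun i =>
    Real.dist_le_of_mem_Icc_01 hy (hx i).2
  exact hi.not_gt (hx i).1

theorem measure_prod_le_add {α β : Type*} [MeasurableSpace α] [MeasurableSpace β]
    {μ : Measure α} {ν : Measure β} [IsProbabilityMeasure μ] [IsProbabilityMeasure ν]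
    {E : Set (α × β)} (hE : MeasurableSet E) {B : Set β} (hB : MeasurableSet B) {a : ℝ≥0∞}
    (h : ∀ s ∉ B, μ {x | (x, s) ∈ E} ≤ a) : μ.prod ν E ≤ a + ν B := by
  rw [Measure.prod_apply_symm hE]
  calc ∫⁻ s, μ ((fun x => (x, s)) ⁻¹' E) ∂ν ≤ ∫⁻ s, (a + B.indicator 1 s) ∂ν := by
        refine lintegral_mono fun s => ?_
        by_cases hs : s ∈ B
        · exact prob_le_one.trans (by simp [hs])
        · exact (h s hs).trans (by simp)
    _ = a + ν B := by
        rw [lintegral_add_left measurable_const, lintegral_indicator_one hB, lintegral_const,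
          measure_univ, mul_one]

/-- `f` is a polynomial of degree at most `m` in each variable separately. -/
def SeparatelyPolynomial {ι : Type*} [DecidableEq ι] (m : ℕ) (f : (ι → ℝ) → ℝ) : Prop :=
  ∀ x i, ∃ p : ℝ[X], p.natDegree ≤ m ∧ ∀ s, f (Function.update x i s) = p.eval s

theorem separatelyPolynomial_eval {ι : Type*} [DecidableEq ι] {m : ℕ}
    {P : MvPolynomial ι ℝ} (hP : P.totalDegree ≤ m) :
    SeparatelyPolynomial m fun x => MvPolynomial.eval x P := by
  intro x i
  let line : ι → ℝ[X] := Function.update (fun j => Polynomial.C (x j)) i Polynomial.X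
  have hline : ∀ j, (line j).natDegree ≤ 1 := fun j => by
    by_cases h : j = i
    · simp [line, h]
    · simp [line, h]
  refine ⟨MvPolynomial.aeval line P, by simpa using MvPolynomial.aeval_natDegree_le P hP line hline,
    fun s => ?_⟩
  have hcomp : (Polynomial.aeval s).comp (MvPolynomial.aeval line) =
      MvPolynomial.aeval (Function.update x i s) := by
    ext j
    by_cases h : j = i
    · subst h; simp [line]
    · simp [line, h]
  simpa [Polynomial.coe_aeval_eq_eval] using (DFunLike.congr_fun hcomp P).symm

namespace SeparatelyPolynomial

variable {k m : ℕ} {f : (Fin (k + 1) → ℝ) → ℝ}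

theorem exists_eval_eq_cons (hf : SeparatelyPolynomial m f) (s : Fin k → ℝ) :
    ∃ p : ℝ[X], p.natDegree ≤ m ∧ ∀ x, f (Fin.cons x s) = p.eval x := by
  obtain ⟨p, hp, h⟩ := hf (Fin.cons 0 s) 0
  exact ⟨p, hp, fun x => by rw [← h, Fin.update_cons_zero]⟩

theorem comp_cons (hf : SeparatelyPolynomial m f) (y : ℝ) :
    SeparatelyPolynomial m fun s : Fin k → ℝ => f (Fin.cons y s) := fun x i => by
  simpa only [Fin.cons_update] using hf (Fin.cons y x) i.succ

end SeparatelyPolynomial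

/-- The uniform probability measure on the unit cube. -/
noncomputable def uniformCube (k : ℕ) : Measure (Fin k → ℝ) :=
  Measure.pi fun _ => volume.restrict (Set.Icc 0 1)

instance : IsProbabilityMeasure (volume.restrict (Set.Icc (0 : ℝ) 1)) := ⟨by simp⟩

instance (k : ℕ) : IsProbabilityMeasure (uniformCube k) := by
  unfold uniformCube; infer_instance

theorem uniformCube_eq_restrict (k : ℕ) :
    uniformCube k = volume.restrict (Set.Icc (0 : Fin k → ℝ) 1) := by
  rw [uniformCube, ← Measure.restrict_pi_pi, Set.pi_univ_Icc]
  rfl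

theorem measure_pi_finSucc {α : Type*} [MeasurableSpace α] {k : ℕ} (μ : Fin (k + 1) → Measure α)
    [∀ i, SigmaFinite (μ i)] (E : Set (Fin (k + 1) → α)) :
    Measure.pi μ E = ((μ 0).prod (Measure.pi fun i => μ i.succ))
      {z | (Fin.cons z.1 z.2 : Fin (k + 1) → α) ∈ E} := by
  let e := MeasurableEquiv.piFinSuccAbove (fun _ : Fin (k + 1) => α) 0
  have hE : E = e ⁻¹' {z | (Fin.cons z.1 z.2 : Fin (k + 1) → α) ∈ E} := by
    ext t
    change t ∈ E ↔ (Fin.cons (t 0) (Fin.tail t) : Fin (k + 1) → α) ∈ E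
    rw [Fin.cons_self_tail]
  conv_lhs => rw [hE]
  exact (measurePreserving_piFinSuccAbove μ 0).measure_preimage_equiv _

theorem uniformCube_abs_lt_le {k m : ℕ} {f : (Fin k → ℝ) → ℝ} (hf : SeparatelyPolynomial m f)
    (hfm : Measurable f) {y : Fin k → ℝ} (hy : y ∈ Set.Icc (0 : Fin k → ℝ) 1) {r : ℝ}
    (hr : 0 < r) :
    uniformCube k {x | |f x| < (r ^ m / (m + 1)) ^ k * |f y|} ≤
      k * ENNReal.ofReal (2 * m * r) := by
  induction k with
  | zero => simp [Subsingleton.elim _ y]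
  | succ k ih =>
    set c : ℝ := r ^ m / (m + 1)
    have : 0 < c := by positivity
    set B : Set (Fin k → ℝ) := {s | |f (Fin.cons (y 0) s)| < c ^ k * |f y|}
    have hcons : Measurable fun z : ℝ × (Fin k → ℝ) => (Fin.cons z.1 z.2 : Fin (k + 1) → ℝ) :=
      (Continuous.finCons continuous_fst continuous_snd).measurable
    have hB : uniformCube k B ≤ k * ENNReal.ofReal (2 * m * r) := by
      have := ih (hf.comp_cons (y 0)) (hfm.comp (hcons.comp measurable_prodMk_left))
        (y := Fin.tail y) ⟨fun i => hy.1 i.succ, fun i => hy.2 i.succ⟩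
      simpa only [Fin.cons_self_tail] using this
    have hslice : ∀ s ∉ B, volume.restrict (Set.Icc (0 : ℝ) 1)
        {x | |f (Fin.cons x s)| < c ^ (k + 1) * |f y|} ≤ ENNReal.ofReal (2 * m * r) := by
      intro s hs
      obtain ⟨p, hp, hfp⟩ := hf.exists_eval_eq_cons s
      simp only [B, Set.mem_ofPred_eq, not_lt, hfp] at hs ⊢
      refine (measure_mono fun x hx => ?_).trans
        (volume_abs_eval_lt_le hp hr ⟨hy.1 0, hy.2 0⟩)
      calc |p.eval x| < c * (c ^ k * |f y|) := by rw [← mul_assoc, ← pow_succ']; exact hx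
        _ ≤ c * |p.eval (y 0)| := by gcongr
    rw [uniformCube, measure_pi_finSucc]
    calc _ ≤ ENNReal.ofReal (2 * m * r) + uniformCube k B :=
          measure_prod_le_add (measurableSet_lt (hfm.comp hcons).abs measurable_const)
            (measurableSet_lt (hfm.comp (hcons.comp measurable_prodMk_left)).abs measurable_const)
            hslice
      _ ≤ ENNReal.ofReal (2 * m * r) + k * ENNReal.ofReal (2 * m * r) := by gcongr
      _ = (k + 1 : ℕ) * ENNReal.ofReal (2 * m * r) := by push_cast; ring

theorem ae_ne_zero_of_separatelyPolynomial {k m : ℕ} (μ : Fin k → Measure ℝ)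
    [∀ i, SigmaFinite (μ i)] [∀ i, NullSingletonClass (μ i)] {f : (Fin k → ℝ) → ℝ}
    (hf : SeparatelyPolynomial m f) (hfm : Measurable f) {y : Fin k → ℝ}
    (hy : f y ≠ 0) : ∀ᵐ x ∂Measure.pi μ, f x ≠ 0 := by
  induction k with
  | zero => exact .of_forall fun x => by rwa [Subsingleton.elim x y]
  | succ k ih =>
    have hcons : Measurable fun z : ℝ × (Fin k → ℝ) => (Fin.cons z.1 z.2 : Fin (k + 1) → ℝ) :=
      (Continuous.finCons continuous_fst continuous_snd).measurable
    have hae : ∀ᵐ s ∂Measure.pi fun i : Fin k => μ i.succ, f (Fin.cons (y 0) s) ≠ 0 := by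
      refine ih _ (hf.comp_cons (y 0)) (hfm.comp (hcons.comp measurable_prodMk_left))
        (y := Fin.tail y) ?_
      rwa [Fin.cons_self_tail]
    have hslice : ∀ᵐ s ∂Measure.pi fun i : Fin k => μ i.succ, ∀ᵐ x ∂μ 0,
        f (Fin.cons x s) ≠ 0 := by
      filter_upwards [hae] with s hs
      obtain ⟨p, -, hfp⟩ := hf.exists_eval_eq_cons s
      simp only [hfp] at hs ⊢
      have hp : p ≠ 0 := by rintro rfl; simp at hs
      exact (Polynomial.finite_setOfPred_isRoot hp).countable.ae_notMem _
    have hmeas : MeasurableSet {z : ℝ × (Fin k → ℝ) | f (Fin.cons z.1 z.2) ≠ 0} :=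
      (hfm.comp hcons) (measurableSet_singleton 0).compl
    have hprod := (Measure.ae_prod_iff_ae_ae hmeas).2 ((Measure.ae_ae_comm hmeas).2 hslice)
    rw [ae_iff, measure_pi_finSucc]
    exact ae_iff.1 hprod

section AreaInequality

variable {E : Type*} [NormedAddCommGroup E] [NormedSpace ℝ E] [FiniteDimensional ℝ E]

theorem exists_partition_injOn_of_det_fderiv_ne_zero {f : E → E} {s : Set E}
    (hf : ∀ x ∈ s, DifferentiableAt ℝ f x) (hs : ∀ x ∈ s, (fderiv ℝ f x).det ≠ 0)
    [MeasurableSpace E] [BorelSpace E] :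
    ∃ t : ℕ → Set E, Pairwise (Function.onFun Disjoint t) ∧ (∀ n, MeasurableSet (t n)) ∧
      s ⊆ ⋃ n, t n ∧ ∀ n, Set.InjOn f (s ∩ t n) := by
  classical
  rcases s.eq_empty_or_nonempty with rfl | hne
  · exact ⟨fun _ => ∅, by simp [Pairwise, Function.onFun], by simp, by simp, by simp⟩
  let ρ : (E →L[ℝ] E) → ℝ≥0 := fun A =>
    if h : A.det ≠ 0 then
      (‖((A.toContinuousLinearEquivOfDetNeZero h).symm : E →L[ℝ] E)‖₊ + 1)⁻¹
    else 1
  have hρ : ∀ A, ρ A ≠ 0 := by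
    intro A
    by_cases h : A.det = 0 <;> simp [ρ, h]
  obtain ⟨t, A, htd, htm, hst, happ, hA⟩ :=
    exists_partition_approximatesLinearOn_of_hasFDerivWithinAt f s (fderiv ℝ f)
      (fun x hx => (hf x hx).hasFDerivAt.hasFDerivWithinAt) ρ hρ
  refine ⟨t, htd, htm, hst, fun n => ?_⟩
  obtain ⟨y, hy, hAy⟩ := hA hne n
  have hdet : (A n).det ≠ 0 := hAy ▸ hs y hy
  let L := (A n).toContinuousLinearEquivOfDetNeZero hdet
  have hL : (L : E →L[ℝ] E) = A n := (A n).coe_toContinuousLinearEquivOfDetNeZero hdet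
  have happ' := happ n
  rw [← hL] at happ'
  refine happ'.injOn (L.subsingleton_or_nnnorm_symm_pos.imp_right fun h => ?_)
  simp only [hL, ρ, dif_pos hdet]
  exact inv_strictAnti₀ h (lt_add_one _)

theorem tsum_indicator_image_le {α β : Type*} {f : α → β} {t : ℕ → Set α}
    (ht : Pairwise (Function.onFun Disjoint t)) {N : ℕ} {u : β} (hN : (f ⁻¹' {u}).encard ≤ N)
    (g : β → ℝ≥0∞) : ∑' n, (f '' t n).indicator g u ≤ N * g u := by
  classical
  have hcard : {n | u ∈ f '' t n}.encard ≤ N := by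
    choose φ hφ hφu using fun n : {n | u ∈ f '' t n} => n.2
    have hinj : Function.Injective fun n => (⟨φ n, hφu n⟩ : f ⁻¹' {u}) := fun a b hab => by
      have hab' : φ a = φ b := Subtype.ext_iff.1 hab
      by_contra hne
      exact Set.disjoint_left.1 (ht (Subtype.coe_ne_coe.2 hne)) (hφ a) (hab' ▸ hφ b)
    exact (Function.Embedding.encard_le ⟨_, hinj⟩).trans hN
  calc ∑' n, (f '' t n).indicator g u
      = ∑' n, {n | u ∈ f '' t n}.indicator (fun _ => g u) n := by
        simp only [Set.indicator_apply, Set.mem_ofPred_eq]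
    _ = {n | u ∈ f '' t n}.encard * g u := by
        rw [← tsum_subtype, ENNReal.tsum_set_const]
    _ ≤ N * g u := by
        gcongr
        exact_mod_cast ENat.toENNReal_mono hcard

variable [MeasurableSpace E] [BorelSpace E]

theorem setLIntegral_abs_det_fderiv_mul_le (μ : Measure E) [μ.IsAddHaarMeasure] {f : E → E}
    (hf : Differentiable ℝ f) {N : ℕ} (hN : ∀ᵐ u ∂μ, (f ⁻¹' {u}).encard ≤ N) {s : Set E}
    (hs : MeasurableSet s) {g : E → ℝ≥0∞} (hg : Measurable g) :
    ∫⁻ x in s, ENNReal.ofReal |(fderiv ℝ f x).det| * g (f x) ∂μ ≤ N * ∫⁻ u, g u ∂μ := by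
  set s' := s ∩ {x | (fderiv ℝ f x).det ≠ 0} with hs'
  have hdet : MeasurableSet {x | (fderiv ℝ f x).det ≠ 0} :=
    (ContinuousLinearMap.continuous_det.measurable.comp (measurable_fderiv ℝ f))
      (measurableSet_singleton 0).compl
  have hs'm : MeasurableSet s' := hs.inter hdet
  obtain ⟨t, htd, htm, hst, hinj⟩ :=
    exists_partition_injOn_of_det_fderiv_ne_zero (fun x _ => hf x) (s := s') fun x hx => hx.2
  have hdisj : Pairwise (Function.onFun Disjoint fun n => s' ∩ t n) := fun i j hij =>
    (htd hij).mono Set.inter_subset_right Set.inter_subset_right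
  have hpm : ∀ n, MeasurableSet (s' ∩ t n) := fun n => hs'm.inter (htm n)
  have hderiv : ∀ n, ∀ x ∈ s' ∩ t n, HasFDerivWithinAt f (fderiv ℝ f x) (s' ∩ t n) x :=
    fun n x _ => (hf x).hasFDerivAt.hasFDerivWithinAt
  have him : ∀ n, MeasurableSet (f '' (s' ∩ t n)) := fun n =>
    measurable_image_of_fderivWithin (hpm n) (hderiv n) (hinj n)
  calc ∫⁻ x in s, ENNReal.ofReal |(fderiv ℝ f x).det| * g (f x) ∂μ
      = ∫⁻ x in s', ENNReal.ofReal |(fderiv ℝ f x).det| * g (f x) ∂μ := by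
        rw [hs', ← Set.inter_comm, ← setLIntegral_indicator hdet]
        refine lintegral_congr fun x => ?_
        by_cases hx : (fderiv ℝ f x).det = 0 <;> simp [hx]
    _ = ∑' n, ∫⁻ x in s' ∩ t n, ENNReal.ofReal |(fderiv ℝ f x).det| * g (f x) ∂μ := by
        rw [← lintegral_iUnion hpm hdisj, ← Set.inter_iUnion, Set.inter_eq_left.2 hst]
    _ = ∑' n, ∫⁻ u, (f '' (s' ∩ t n)).indicator g u ∂μ := by
        refine tsum_congr fun n => ?_
        rw [lintegral_indicator (him n),
          lintegral_image_eq_lintegral_abs_det_fderiv_mul μ (hpm n) (hderiv n) (hinj n)]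
    _ = ∫⁻ u, ∑' n, (f '' (s' ∩ t n)).indicator g u ∂μ :=
        (lintegral_tsum fun n => (hg.indicator (him n)).aemeasurable).symm
    _ ≤ ∫⁻ u, N * g u ∂μ :=
        lintegral_mono_ae <| hN.mono fun u hu => tsum_indicator_image_le hdisj hu g
    _ = N * ∫⁻ u, g u ∂μ := lintegral_const_mul _ hg

end AreaInequality

theorem lintegral_pi_prod {α : Type*} [MeasurableSpace α] {k : ℕ} (μ : Fin k → Measure α)
    [∀ i, SigmaFinite (μ i)] {h : Fin k → α → ℝ≥0∞} (hm : ∀ i, Measurable (h i)) :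
    ∫⁻ u, ∏ i, h i (u i) ∂Measure.pi μ = ∏ i, ∫⁻ x, h i x ∂μ i := by
  induction k with
  | zero => simp
  | succ k ih =>
    have hprod : Measurable fun u : Fin k → α => ∏ i, h i.succ (u i) :=
      Finset.measurable_prod _ fun i _ => (hm i.succ).comp (measurable_pi_apply i)
    calc ∫⁻ u, ∏ i, h i (u i) ∂Measure.pi μ
        = ∫⁻ z : α × (Fin k → α), h 0 z.1 * ∏ i, h i.succ (z.2 i)
            ∂(μ 0).prod (Measure.pi fun i : Fin k => μ i.succ) := by
          simp only [Fin.prod_univ_succ]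
          exact (measurePreserving_piFinSuccAbove μ 0).lintegral_comp
            (((hm 0).comp measurable_fst).mul (hprod.comp measurable_snd))
      _ = ∏ i, ∫⁻ x, h i x ∂μ i := by
          rw [lintegral_prod_mul (hm 0).aemeasurable hprod.aemeasurable, ih _ fun i => hm i.succ,
            Fin.prod_univ_succ]

theorem setLIntegral_Icc_inv_abs {a b : ℝ} (ha : 0 < a) (hab : a ≤ b) :
    ∫⁻ x in Set.Icc a b, ENNReal.ofReal |x|⁻¹ = ENNReal.ofReal (Real.log (b / a)) := by
  have hpos : ∀ x ∈ Set.Icc a b, 0 < x := fun x hx => ha.trans_le hx.1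
  rw [setLIntegral_congr_fun measurableSet_Icc fun x hx => by rw [abs_of_pos (hpos x hx)],
    ← integral_inv_of_pos ha (ha.trans_le hab), intervalIntegral.integral_of_le hab,
    ← integral_Icc_eq_integral_Ioc, ofReal_integral_eq_lintegral_ofReal]
  · exact (continuousOn_inv₀.mono fun x hx => (hpos x hx).ne').integrableOn_Icc
  · exact (ae_restrict_iff' measurableSet_Icc).2
      (.of_forall fun x hx => (inv_pos.2 (hpos x hx)).le)

theorem setLIntegral_inv_abs_le {a b : ℝ} (ha : 0 < a) (hab : a ≤ b) :
    ∫⁻ x in {x : ℝ | |x| ∈ Set.Icc a b}, ENNReal.ofReal |x|⁻¹ ≤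
      ENNReal.ofReal (2 * Real.log (b / a)) := by
  have hset : {x : ℝ | |x| ∈ Set.Icc a b} ⊆ Set.Icc a b ∪ Set.Icc (-b) (-a) := by
    intro x hx
    rcases abs_choice x with h | h <;> simp only [Set.mem_ofPred_eq, h] at hx
    · exact .inl hx
    · exact .inr ⟨by linarith [hx.2], by linarith [hx.1]⟩
  have hneg : ∫⁻ x in Set.Icc (-b) (-a), ENNReal.ofReal |x|⁻¹ =
      ENNReal.ofReal (Real.log (b / a)) := by
    rw [← setLIntegral_Icc_inv_abs ha hab,
      ← (Measure.measurePreserving_neg volume).setLIntegral_comp_preimage_emb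
        (MeasurableEquiv.neg ℝ).measurableEmbedding _ (Set.Icc a b)]
    simp
  have hlog : 0 ≤ Real.log (b / a) := Real.log_nonneg ((one_le_div ha).2 hab)
  calc _ ≤ ∫⁻ x in Set.Icc a b ∪ Set.Icc (-b) (-a), ENNReal.ofReal |x|⁻¹ :=
        lintegral_mono_set hset
    _ ≤ ENNReal.ofReal (Real.log (b / a)) + ENNReal.ofReal (Real.log (b / a)) :=
        (lintegral_union_le _ _ _).trans_eq (by rw [setLIntegral_Icc_inv_abs ha hab, hneg])
    _ = ENNReal.ofReal (2 * Real.log (b / a)) := by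
        rw [← ENNReal.ofReal_add hlog hlog, two_mul]

section AlgebraicRelation

variable {σ K : Type*} [Fintype σ] [Field K]

theorem finrank_restrictTotalDegree_le (M : ℕ) :
    Module.finrank K (MvPolynomial.restrictTotalDegree σ K M) ≤ (M + 1) ^ Fintype.card σ := by
  let exponent : {n : σ →₀ ℕ | ∀ i, n i ≤ M} → σ → Fin (M + 1) := fun n i =>
    ⟨n.1 i, Nat.lt_succ_of_le (n.2 i)⟩
  have hinj : Function.Injective exponent := fun a b hab =>
    Subtype.ext (Finsupp.ext fun i => congrArg Fin.val (congrFun hab i))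
  calc Module.finrank K (MvPolynomial.restrictTotalDegree σ K M)
      ≤ Module.finrank K (MvPolynomial.restrictDegree σ K M) :=
        Submodule.finrank_mono (MvPolynomial.restrictTotalDegree_le_restrictDegree ..)
    _ = Nat.card {n : σ →₀ ℕ | ∀ i, n i ≤ M} :=
        Module.finrank_eq_nat_card_basis (MvPolynomial.basisRestrictSupport K _)
    _ ≤ Nat.card (σ → Fin (M + 1)) := Nat.card_le_card_of_injective exponent hinj
    _ = (M + 1) ^ Fintype.card σ := by simp [Nat.card_fun]

/-- The monomial `∏ i, (P i / W) ^ a i` with its denominators cleared by `W ^ (N * card σ)`. -/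
noncomputable def clearedMonomial (P : σ → MvPolynomial σ K) (W : MvPolynomial σ K) (N : ℕ)
    (a : σ → Fin (N + 1)) : MvPolynomial σ K :=
  ∏ i, P i ^ (a i : ℕ) * W ^ (N - a i)

variable {P : σ → MvPolynomial σ K} {W : MvPolynomial σ K} {N d : ℕ}

theorem totalDegree_clearedMonomial_le (hP : ∀ i, (P i).totalDegree ≤ d) (hW : W.totalDegree ≤ d)
    (a : σ → Fin (N + 1)) :
    (clearedMonomial P W N a).totalDegree ≤ d * N * Fintype.card σ := by
  have hfactor : ∀ i, (P i ^ (a i : ℕ) * W ^ (N - a i)).totalDegree ≤ d * N := fun i =>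
    calc (P i ^ (a i : ℕ) * W ^ (N - a i)).totalDegree
        ≤ a i * (P i).totalDegree + (N - a i) * W.totalDegree :=
          (MvPolynomial.totalDegree_mul _ _).trans <|
            add_le_add (MvPolynomial.totalDegree_pow _ _) (MvPolynomial.totalDegree_pow _ _)
      _ ≤ a i * d + (N - a i) * d := by gcongr; exact hP i
      _ = d * N := by rw [← add_mul, Nat.add_sub_of_le (Nat.lt_succ_iff.1 (a i).2), mul_comm]
  calc (clearedMonomial P W N a).totalDegree ≤ ∑ _i : σ, d * N :=
        (MvPolynomial.totalDegree_finsetProd _ _).trans (Finset.sum_le_sum fun i _ => hfactor i)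
    _ = d * N * Fintype.card σ := by simp [mul_comm]

theorem eval_clearedMonomial {t u : σ → K}
    (hu : ∀ i, MvPolynomial.eval t (P i) = MvPolynomial.eval t W * u i) (a : σ → Fin (N + 1)) :
    MvPolynomial.eval t (clearedMonomial P W N a) =
      MvPolynomial.eval t W ^ (N * Fintype.card σ) * ∏ i, u i ^ (a i : ℕ) := by
  have hfactor : ∀ i, (MvPolynomial.eval t W * u i) ^ (a i : ℕ) *
      MvPolynomial.eval t W ^ (N - a i) = MvPolynomial.eval t W ^ N * u i ^ (a i : ℕ) := fun i => by
    rw [mul_pow, mul_right_comm, ← pow_add, Nat.add_sub_of_le (Nat.lt_succ_iff.1 (a i).2)]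
  simp only [clearedMonomial, map_prod, map_mul, map_pow, hu, hfactor]
  rw [Finset.prod_mul_distrib, Finset.prod_const, Finset.card_univ, ← pow_mul]

theorem exists_sum_clearedMonomial_eq_zero [DecidableEq σ] (hP : ∀ i, (P i).totalDegree ≤ d)
    (hW : W.totalDegree ≤ d) (hN : N = (d * Fintype.card σ + 1) ^ Fintype.card σ) (j : σ) :
    ∃ g : Fin (N + 1) × (σ → Fin (N + 1)) → K, g ≠ 0 ∧
      ∑ z, g z • (clearedMonomial P W N z.2 * MvPolynomial.X j ^ (z.1 : ℕ)) = 0 := by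
  set k := Fintype.card σ with hk
  let M := d * N * k + N
  let v : Fin (N + 1) × (σ → Fin (N + 1)) → MvPolynomial.restrictTotalDegree σ K M := fun z =>
    ⟨clearedMonomial P W N z.2 * MvPolynomial.X j ^ (z.1 : ℕ), by
      rw [MvPolynomial.mem_restrictTotalDegree]
      refine (MvPolynomial.totalDegree_mul _ _).trans (add_le_add
        (totalDegree_clearedMonomial_le hP hW z.2) ?_)
      rw [MvPolynomial.totalDegree_X_pow]
      exact Nat.lt_succ_iff.1 z.1.2⟩
  have hcard : (M + 1) ^ k < Fintype.card (Fin (N + 1) × (σ → Fin (N + 1))) :=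
    calc (M + 1) ^ k ≤ ((N + 1) * (d * k + 1)) ^ k := by
          gcongr
          simp only [M]
          nlinarith
      _ = (N + 1) ^ k * N := by rw [mul_pow, ← hN]
      _ < (N + 1) ^ k * (N + 1) := by gcongr; exact Nat.lt_succ_self N
      _ = Fintype.card (Fin (N + 1) × (σ → Fin (N + 1))) := by simp [hk, mul_comm]
  have hdep : ¬LinearIndependent K v := fun hli =>
    (hli.fintype_card_le_finrank.trans (finrank_restrictTotalDegree_le M)).not_gt hcard
  obtain ⟨g, hg, z, hz⟩ := Fintype.not_linearIndependent_iff.1 hdep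
  refine ⟨g, fun h => hz (congrFun h z), ?_⟩
  simpa [v] using congrArg Subtype.val hg

theorem exists_polynomial_relation (hP : ∀ i, (P i).totalDegree ≤ d) (hW : W.totalDegree ≤ d)
    (hN : N = (d * Fintype.card σ + 1) ^ Fintype.card σ) (j : σ) :
    ∃ G : (MvPolynomial σ K)[X], G ≠ 0 ∧ G.natDegree ≤ N ∧ ∀ t u : σ → K,
      MvPolynomial.eval t W ≠ 0 →
      (∀ i, MvPolynomial.eval t (P i) = MvPolynomial.eval t W * u i) →
        (G.map (MvPolynomial.eval u)).eval (t j) = 0 := by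
  classical
  obtain ⟨g, hg0, hg⟩ := exists_sum_clearedMonomial_eq_zero hP hW hN j
  let exponent : (σ → Fin (N + 1)) → σ →₀ ℕ := fun a =>
    Finsupp.equivFunOnFinite.symm fun i => (a i : ℕ)
  have hexponent : Function.Injective exponent := fun a b hab => funext fun i =>
    Fin.val_injective (congrFun (Finsupp.equivFunOnFinite.symm.injective hab) i)
  let c : Fin (N + 1) → MvPolynomial σ K := fun b =>
    ∑ a, MvPolynomial.monomial (exponent a) (g (b, a))
  have hc : ∀ a b, (c b).coeff (exponent a) = g (b, a) := fun a b => by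
    simp [c, MvPolynomial.coeff_sum, MvPolynomial.coeff_monomial, hexponent.eq_iff]
  let G : (MvPolynomial σ K)[X] := ∑ b : Fin (N + 1), Polynomial.monomial (b : ℕ) (c b)
  have hG : ∀ b : Fin (N + 1), G.coeff b = c b := fun b => by
    simp [G, Polynomial.finsetSum_coeff, Polynomial.coeff_monomial, Fin.val_inj]
  refine ⟨G, fun h => hg0 (funext fun z => ?_), ?_, fun t u hWt hu => ?_⟩
  · rw [← hc, ← hG, h, Polynomial.coeff_zero, MvPolynomial.coeff_zero, Pi.zero_apply]
  · exact Polynomial.natDegree_sum_le_of_forall_le _ _ fun b _ =>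
      (Polynomial.natDegree_monomial_le _).trans (Nat.lt_succ_iff.1 b.2)
  · have hc_eval : ∀ b, MvPolynomial.eval u (c b) = ∑ a, g (b, a) * ∏ i, u i ^ (a i : ℕ) :=
      fun b => by
        simp [c, exponent, MvPolynomial.eval_monomial, Finsupp.prod_fintype]
    have hrel : MvPolynomial.eval t W ^ (N * Fintype.card σ) *
        (G.map (MvPolynomial.eval u)).eval (t j) = 0 :=
      calc _ = MvPolynomial.eval t (∑ z, g z •
            (clearedMonomial P W N z.2 * MvPolynomial.X j ^ (z.1 : ℕ))) := by
            simp only [G, Polynomial.map_sum, Polynomial.map_monomial, Polynomial.eval_finsetSum,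
              Polynomial.eval_monomial, hc_eval, Fintype.sum_prod_type, map_sum, map_mul, map_pow,
              MvPolynomial.smul_eval, eval_clearedMonomial hu, MvPolynomial.eval_X,
              Finset.mul_sum]
            exact Finset.sum_congr rfl fun b _ => Finset.sum_congr rfl fun a _ => by ring
        _ = 0 := by rw [hg, map_zero]
    exact (mul_eq_zero.1 hrel).resolve_left (pow_ne_zero _ hWt)

end AlgebraicRelation

theorem ae_eval_ne_zero {k : ℕ} {P : MvPolynomial (Fin k) ℝ} (hP : P ≠ 0) :
    ∀ᵐ u : Fin k → ℝ, MvPolynomial.eval u P ≠ 0 := by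
  obtain ⟨y, hy⟩ : ∃ y, MvPolynomial.eval y P ≠ 0 := by
    by_contra! h
    exact hP (MvPolynomial.funext fun y => by rw [h, map_zero])
  exact ae_ne_zero_of_separatelyPolynomial (fun _ => volume) (separatelyPolynomial_eval le_rfl)
    (MvPolynomial.continuous_eval P).measurable hy

section FibreBound

variable {k d N : ℕ} {P : Fin k → MvPolynomial (Fin k) ℝ} {W : MvPolynomial (Fin k) ℝ}
  {q : (Fin k → ℝ) → Fin k → ℝ}

theorem ae_exists_finset_of_rational (hP : ∀ i, (P i).totalDegree ≤ d) (hW : W.totalDegree ≤ d)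
    (hW0 : ∀ t, MvPolynomial.eval t W ≠ 0)
    (hq : ∀ t i, MvPolynomial.eval t (P i) = MvPolynomial.eval t W * q t i)
    (hN : N = (d * k + 1) ^ k) (j : Fin k) :
    ∀ᵐ u : Fin k → ℝ, ∃ F : Finset ℝ, F.card ≤ N ∧ ∀ t, q t = u → t j ∈ F := by
  classical
  obtain ⟨G, hG0, hGN, hG⟩ := exists_polynomial_relation hP hW (by simpa using hN) j
  filter_upwards [ae_eval_ne_zero (Polynomial.leadingCoeff_ne_zero.2 hG0)] with u hu
  set R := G.map (MvPolynomial.eval u) with hR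
  have hR0 : R ≠ 0 := fun h => hu <| by
    simpa [hR] using congrArg (Polynomial.coeff · G.natDegree) h
  refine ⟨R.roots.toFinset, ?_, ?_⟩
  · exact (Multiset.toFinset_card_le _).trans
      (R.card_roots'.trans (Polynomial.natDegree_map_le.trans hGN))
  · rintro t rfl
    rw [Multiset.mem_toFinset, Polynomial.mem_roots hR0]
    exact hG t (q t) (hW0 t) (hq t)

theorem ae_encard_fibre_le_of_rational (hP : ∀ i, (P i).totalDegree ≤ d) (hW : W.totalDegree ≤ d)
    (hW0 : ∀ t, MvPolynomial.eval t W ≠ 0)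
    (hq : ∀ t i, MvPolynomial.eval t (P i) = MvPolynomial.eval t W * q t i)
    (hN : N = (d * k + 1) ^ k) : ∀ᵐ u, (q ⁻¹' {u}).encard ≤ (N ^ k : ℕ) := by
  filter_upwards [ae_all_iff.2 (ae_exists_finset_of_rational hP hW hW0 hq hN)] with u hu
  choose F hF hFt using hu
  calc (q ⁻¹' {u}).encard ≤ (Fintype.piFinset F : Set (Fin k → ℝ)).encard :=
        Set.encard_le_encard fun t ht => by simpa using fun j => hFt j t ht
    _ = ∏ j, (F j).card := by rw [Set.encard_coe_eq_coe_finsetCard, Fintype.card_piFinset]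
    _ ≤ (N ^ k : ℕ) := by
        exact_mod_cast (Finset.prod_le_pow_card _ _ _ fun j _ => hF j).trans_eq (by simp)

end FibreBound

theorem det_fderiv_eq_zero_of_apply_eq_const {k : ℕ} {q : (Fin k → ℝ) → Fin k → ℝ}
    {i : Fin k} {c : ℝ} (hqi : ∀ t, q t i = c) {t : Fin k → ℝ} (hq : DifferentiableAt ℝ q t) :
    (fderiv ℝ q t).det = 0 := by
  have hzero : ∀ v, fderiv ℝ q t v i = 0 := fun v => by
    have hi := hasFDerivAt_pi'.1 hq.hasFDerivAt i
    rw [funext hqi] at hi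
    exact DFunLike.congr_fun (hi.unique (hasFDerivAt_const c t)) v
  by_contra hdet
  obtain ⟨v, hv⟩ := ((fderiv ℝ q t).toContinuousLinearEquivOfDetNeZero hdet).surjective
    (Pi.single i 1)
  rw [ContinuousLinearMap.toContinuousLinearEquivOfDetNeZero_apply] at hv
  simpa [hv] using hzero v

theorem exists_abs_eval_pos_forall_abs_eval_le {k : ℕ} {P : MvPolynomial (Fin k) ℝ} (hP : P ≠ 0) :
    ∃ y ∈ Set.Icc (0 : Fin k → ℝ) 1, 0 < |MvPolynomial.eval y P| ∧
      ∀ t ∈ Set.Icc (0 : Fin k → ℝ) 1, |MvPolynomial.eval t P| ≤ |MvPolynomial.eval y P| := by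
  obtain ⟨y, hy, hmax⟩ := isCompact_Icc.exists_isMaxOn
    (Set.nonempty_Icc.2 (zero_le_one' (Fin k → ℝ)))
    (MvPolynomial.continuous_eval P).abs.continuousOn
  refine ⟨y, hy, (abs_nonneg _).lt_of_ne fun h0 => hP ?_, hmax⟩
  refine MvPolynomial.funext_set (fun _ => Set.Icc (0 : ℝ) 1)
    (fun _ => Set.Icc_infinite one_pos) fun t ht => ?_
  rw [map_zero, ← abs_eq_zero]
  exact ((hmax ⟨fun i => (ht i trivial).1, fun i => (ht i trivial).2⟩).trans h0.ge).antisymm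
    (abs_nonneg _)

theorem measurableSet_prod_abs_lt_det_fderiv {k : ℕ} {q : (Fin k → ℝ) → Fin k → ℝ}
    (hq : Measurable q) (δ : ℝ) :
    MeasurableSet {t | ∏ i, |q t i| < δ * |(fderiv ℝ q t).det|} :=
  measurableSet_lt (Finset.measurable_prod _ fun i _ => ((measurable_pi_apply i).comp hq).abs)
    ((ContinuousLinearMap.continuous_det.measurable.comp (measurable_fderiv ℝ q)).abs.const_mul δ)

theorem one_le_ofReal_abs_mul_prod_ofReal_inv {ι : Type*} [Fintype ι] {x : ι → ℝ} {δ D : ℝ}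
    (hx : ∀ i, x i ≠ 0) (h : ∏ i, |x i| ≤ δ * |D|) :
    1 ≤ ENNReal.ofReal |D| * (ENNReal.ofReal δ * ∏ i, ENNReal.ofReal |x i|⁻¹) := by
  have hpos : 0 < ∏ i, |x i| := Finset.prod_pos fun i _ => abs_pos.2 (hx i)
  rw [← ENNReal.ofReal_prod_of_nonneg fun i _ => by positivity,
    ← ENNReal.ofReal_mul' (Finset.prod_nonneg fun i _ => by positivity),
    ← ENNReal.ofReal_mul (abs_nonneg _), ENNReal.one_le_ofReal, Finset.prod_inv_distrib,
    ← mul_assoc, ← div_eq_mul_inv, one_le_div hpos, mul_comm]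
  exact h

theorem volume_prod_abs_lt_det_fderiv_inter_le {k N : ℕ} {q : (Fin k → ℝ) → Fin k → ℝ}
    (hq : Differentiable ℝ q) (hN : ∀ᵐ u, (q ⁻¹' {u}).encard ≤ N) {a b : Fin k → ℝ}
    (ha : ∀ i, 0 < a i) (hab : ∀ i, a i ≤ b i) (δ : ℝ) :
    volume ({t | ∏ i, |q t i| < δ * |(fderiv ℝ q t).det|} ∩
        {t | ∀ i, |q t i| ∈ Set.Icc (a i) (b i)}) ≤
      N * (ENNReal.ofReal δ * ∏ i, ENNReal.ofReal (2 * Real.log (b i / a i))) := by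
  have hset : ∀ i, MeasurableSet {x : ℝ | |x| ∈ Set.Icc (a i) (b i)} := fun i =>
    continuous_abs.measurable measurableSet_Icc
  have hqm : Measurable q := hq.continuous.measurable
  set S := {t | ∏ i, |q t i| < δ * |(fderiv ℝ q t).det|} ∩
    {t | ∀ i, |q t i| ∈ Set.Icc (a i) (b i)} with hS_def
  have hS : MeasurableSet S := by
    rw [hS_def, Set.ofPred_forall]
    exact (measurableSet_prod_abs_lt_det_fderiv hqm δ).inter <|
      .iInter fun i => ((measurable_pi_apply i).comp hqm) (hset i)
  let h : Fin k → ℝ → ℝ≥0∞ := fun i =>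
    {x : ℝ | |x| ∈ Set.Icc (a i) (b i)}.indicator fun x => ENNReal.ofReal |x|⁻¹
  have hm : ∀ i, Measurable (h i) := fun i =>
    continuous_abs.measurable.inv.ennreal_ofReal.indicator (hset i)
  have hprod : Measurable fun u : Fin k → ℝ => ∏ i, h i (u i) :=
    Finset.measurable_prod _ fun i _ => (hm i).comp (measurable_pi_apply i)
  have hone : ∀ t ∈ S, 1 ≤ ENNReal.ofReal |(fderiv ℝ q t).det| *
      (ENNReal.ofReal δ * ∏ i, h i (q t i)) := by
    rintro t ⟨hdet, hq⟩
    have hh : ∀ i, h i (q t i) = ENNReal.ofReal |q t i|⁻¹ := fun i =>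
      Set.indicator_of_mem (s := {x : ℝ | |x| ∈ Set.Icc (a i) (b i)}) (hq i) _
    simp only [hh]
    exact one_le_ofReal_abs_mul_prod_ofReal_inv
      (fun i => abs_pos.1 ((ha i).trans_le (hq i).1)) hdet.le
  calc volume S = ∫⁻ _t in S, 1 := by simp
    _ ≤ ∫⁻ t in S, ENNReal.ofReal |(fderiv ℝ q t).det| *
          (ENNReal.ofReal δ * ∏ i, h i (q t i)) := setLIntegral_mono' hS hone
    _ ≤ N * ∫⁻ u : Fin k → ℝ, ENNReal.ofReal δ * ∏ i, h i (u i) :=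
        setLIntegral_abs_det_fderiv_mul_le volume hq hN hS (hprod.const_mul _)
    _ = N * (ENNReal.ofReal δ * ∏ i, ∫⁻ x, h i x) := by
        rw [lintegral_const_mul _ hprod, volume_pi, lintegral_pi_prod _ hm]
    _ ≤ N * (ENNReal.ofReal δ * ∏ i, ENNReal.ofReal (2 * Real.log (b i / a i))) := by
        gcongr with i
        rw [lintegral_indicator (hset i)]
        exact setLIntegral_inv_abs_le (ha i) (hab i)

theorem abs_mem_Icc_of_eq_mul {w B p x a b : ℝ} (hw : 1 ≤ w) (hwB : w ≤ B) (h : p = w * x)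
    (hp : |p| ∈ Set.Icc a b) : |x| ∈ Set.Icc (a / B) b := by
  rw [h, abs_mul, abs_of_pos (one_pos.trans_le hw)] at hp
  exact ⟨(div_le_iff₀' (one_pos.trans_le (hw.trans hwB))).2 (hp.1.trans (by gcongr)),
    (le_mul_of_one_le_left (abs_nonneg _) hw).trans hp.2⟩

section Rational

variable {k d : ℕ} {P : Fin k → MvPolynomial (Fin k) ℝ} {W : MvPolynomial (Fin k) ℝ}
  {q : (Fin k → ℝ) → Fin k → ℝ}

theorem exists_uniformCube_le_add_volume_inter_abs_mem_Icc (hP : ∀ i, (P i).totalDegree ≤ d)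
    (hP0 : ∀ i, P i ≠ 0) (hW1 : ∀ t, 1 ≤ MvPolynomial.eval t W) {B : ℝ}
    (hWB : ∀ t ∈ Set.Icc (0 : Fin k → ℝ) 1, MvPolynomial.eval t W ≤ B)
    (hPq : ∀ t i, MvPolynomial.eval t (P i) = MvPolynomial.eval t W * q t i)
    {r : ℝ} (hr : 0 < r) :
    ∃ σ : Fin k → ℝ, (∀ i, 0 < σ i) ∧ ∀ E : Set (Fin k → ℝ),
      uniformCube k E ≤ k * (k * ENNReal.ofReal (2 * d * r)) + volume (E ∩
        {t | ∀ i, |q t i| ∈ Set.Icc ((r ^ d / (d + 1)) ^ k * σ i / B) (σ i)}) := by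
  choose y hy hσ hmax using fun i => exists_abs_eval_pos_forall_abs_eval_le (hP0 i)
  refine ⟨fun i => |MvPolynomial.eval (y i) (P i)|, hσ, fun E => ?_⟩
  let small (i : Fin k) : Set (Fin k → ℝ) := {t | |MvPolynomial.eval t (P i)| <
    (r ^ d / (d + 1)) ^ k * |MvPolynomial.eval (y i) (P i)|}
  have hsub : E ∩ Set.Icc 0 1 ⊆ (⋃ i, small i) ∩ Set.Icc 0 1 ∪ E ∩ {t | ∀ i, |q t i| ∈
      Set.Icc ((r ^ d / (d + 1)) ^ k * |MvPolynomial.eval (y i) (P i)| / B)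
        |MvPolynomial.eval (y i) (P i)|} := by
    rintro t ⟨htE, ht⟩
    by_cases hsmall : t ∈ ⋃ i, small i
    · exact .inl ⟨hsmall, ht⟩
    simp only [small, Set.mem_iUnion, Set.mem_ofPred_eq, not_exists, not_lt] at hsmall
    exact .inr ⟨htE, fun i =>
      abs_mem_Icc_of_eq_mul (hW1 t) (hWB t ht) (hPq t i) ⟨hsmall i, hmax i t ht⟩⟩
  have hsmall : uniformCube k (⋃ i, small i) ≤ k * (k * ENNReal.ofReal (2 * d * r)) :=
    calc uniformCube k (⋃ i, small i) ≤ ∑ i, uniformCube k (small i) :=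
          measure_iUnion_fintype_le _ _
      _ ≤ ∑ _i : Fin k, k * ENNReal.ofReal (2 * d * r) := Finset.sum_le_sum fun i _ =>
          uniformCube_abs_lt_le (separatelyPolynomial_eval (hP i))
            (MvPolynomial.continuous_eval _).measurable (hy i) hr
      _ = k * (k * ENNReal.ofReal (2 * d * r)) := by simp
  refine le_trans ?_ (add_le_add_left hsmall _)
  rw [uniformCube_eq_restrict, Measure.restrict_apply' measurableSet_Icc,
    Measure.restrict_apply' measurableSet_Icc]
  exact (measure_mono hsub).trans (measure_union_le _ _)

theorem uniformCube_prod_abs_lt_det_fderiv_le_of_ne_zero (hq : Differentiable ℝ q)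
    (hP : ∀ i, (P i).totalDegree ≤ d) (hP0 : ∀ i, P i ≠ 0) (hW : W.totalDegree ≤ d)
    (hW1 : ∀ t, 1 ≤ MvPolynomial.eval t W) {B : ℝ}
    (hWB : ∀ t ∈ Set.Icc (0 : Fin k → ℝ) 1, MvPolynomial.eval t W ≤ B)
    (hPq : ∀ t i, MvPolynomial.eval t (P i) = MvPolynomial.eval t W * q t i)
    {r : ℝ} (hr : 0 < r) (hr1 : r ≤ 1) (δ : ℝ) :
    uniformCube k {t | ∏ i, |q t i| < δ * |(fderiv ℝ q t).det|} ≤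
      k * (k * ENNReal.ofReal (2 * d * r)) + (((d * k + 1) ^ k) ^ k : ℕ) *
        (ENNReal.ofReal δ * ENNReal.ofReal (2 * Real.log (B / (r ^ d / (d + 1)) ^ k)) ^ k) := by
  obtain ⟨σ, hσ, hcube⟩ := exists_uniformCube_le_add_volume_inter_abs_mem_Icc hP hP0 hW1 hWB hPq hr
  refine (hcube _).trans (add_le_add_right ?_ _)
  set c : ℝ := (r ^ d / (d + 1)) ^ k
  have hc0 : 0 < c := by positivity
  have hc1 : c ≤ 1 := pow_le_one₀ (by positivity) <|
    (div_le_self (by positivity) (by simp)).trans (pow_le_one₀ hr.le hr1)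
  have hB1 : 1 ≤ B := (hW1 0).trans (hWB 0 (Set.left_mem_Icc.2 zero_le_one))
  have hcσ (i : Fin k) : 0 < c * σ i := mul_pos hc0 (hσ i)
  have hratio (i : Fin k) : σ i / (c * σ i / B) = B / c := by
    rw [div_div_eq_mul_div, mul_comm c, mul_div_mul_left _ _ (hσ i).ne']
  simpa only [hratio, Finset.prod_const, Finset.card_fin] using
    volume_prod_abs_lt_det_fderiv_inter_le hq
      (ae_encard_fibre_le_of_rational hP hW (fun t => (one_pos.trans_le (hW1 t)).ne') hPq rfl)
      (fun i => div_pos (hcσ i) (one_pos.trans_le hB1))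
      (fun i => (div_le_self (hcσ i).le hB1).trans (mul_le_of_le_one_left (hσ i).le hc1)) δ

theorem uniformCube_prod_abs_lt_det_fderiv_le (hq : Differentiable ℝ q)
    (hP : ∀ i, (P i).totalDegree ≤ d) (hW : W.totalDegree ≤ d)
    (hW1 : ∀ t, 1 ≤ MvPolynomial.eval t W) {B : ℝ}
    (hWB : ∀ t ∈ Set.Icc (0 : Fin k → ℝ) 1, MvPolynomial.eval t W ≤ B)
    (hPq : ∀ t i, MvPolynomial.eval t (P i) = MvPolynomial.eval t W * q t i)
    {r : ℝ} (hr : 0 < r) (hr1 : r ≤ 1) (δ : ℝ) :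
    uniformCube k {t | ∏ i, |q t i| < δ * |(fderiv ℝ q t).det|} ≤
      k * (k * ENNReal.ofReal (2 * d * r)) + (((d * k + 1) ^ k) ^ k : ℕ) *
        (ENNReal.ofReal δ * ENNReal.ofReal (2 * Real.log (B / (r ^ d / (d + 1)) ^ k)) ^ k) := by
  by_cases hP0 : ∀ i, P i ≠ 0
  · exact uniformCube_prod_abs_lt_det_fderiv_le_of_ne_zero hq hP hP0 hW hW1 hWB hPq hr hr1 δ
  · push Not at hP0
    obtain ⟨i, hi⟩ := hP0
    have hqi : ∀ t, q t i = 0 := fun t =>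
      (mul_eq_zero.1 ((hPq t i).symm.trans (by rw [hi, map_zero]))).resolve_left
        (one_pos.trans_le (hW1 t)).ne'
    have hprod : ∀ t, ¬∏ i, |q t i| < 0 := fun t =>
      (Finset.prod_nonneg fun i _ => abs_nonneg _).not_gt
    simp [det_fderiv_eq_zero_of_apply_eq_const hqi (hq _), hprod]

end Rational

section Householder

variable {ι E : Type*} [Fintype ι] [NormedAddCommGroup E] [NormedSpace ℝ E]

/-- The Householder reflection of a tuple of vectors in the hyperplane orthogonal to `v`, acting on
the index `i` of the tuple. It is the identity for `v = 0`, as `x / 0 = 0`. -/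
noncomputable def householder (v : ι → ℝ) : (ι → E) →L[ℝ] (ι → E) :=
  ContinuousLinearMap.id ℝ _ - ContinuousLinearMap.pi fun i =>
    (2 * v i / (v ⬝ᵥ v)) • ∑ j, v j • ContinuousLinearMap.proj j

theorem householder_apply (v : ι → ℝ) (z : ι → E) (i : ι) :
    householder v z i = z i - (2 * v i / (v ⬝ᵥ v)) • ∑ j, v j • z j := by
  simp [householder]

theorem sum_sq_householder (v b : ι → ℝ) : ∑ i, householder v b i ^ 2 = ∑ i, b i ^ 2 := by
  rcases eq_or_ne (v ⬝ᵥ v) 0 with hv | hv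
  · simp [householder_apply, hv]
  · have hexpand : ∀ i, householder v b i ^ 2 = b i ^ 2 - 4 * (v ⬝ᵥ b) / (v ⬝ᵥ v) * (v i * b i) +
        4 * (v ⬝ᵥ b) ^ 2 / (v ⬝ᵥ v) ^ 2 * (v i * v i) := fun i => by
      simp only [householder_apply, smul_eq_mul, ← dotProduct.eq_1]
      ring
    simp only [hexpand, Finset.sum_add_distrib, Finset.sum_sub_distrib, ← Finset.mul_sum,
      ← dotProduct.eq_1]
    field_simp
    ring

theorem map_householder_single [DecidableEq ι] (L : StrongDual ℝ (ι → E)) (v : ι → ℝ) (i : ι)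
    (e : E) :
    L (householder v (Pi.single i e)) = householder v (fun j => L (Pi.single j e)) i := by
  have hsum : householder v (Pi.single i e) =
      Pi.single i e - (2 * v i / (v ⬝ᵥ v)) • ∑ j, v j • (Pi.single j e : ι → E) := by
    ext j
    simp only [householder_apply, Pi.sub_apply, Pi.smul_apply, Finset.sum_apply, Pi.single_apply,
      smul_ite, smul_zero, Finset.sum_ite_eq, Finset.sum_ite_eq', Finset.mem_univ, if_true]
    module
  simp [hsum, householder_apply]

end Householder

instance (n : ℕ) : IsProbabilityMeasure (_root_.stdGaussian n) := by
  unfold _root_.stdGaussian; infer_instance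

theorem charFunDual_gaussianReal_zero_one (L : StrongDual ℝ ℝ) :
    charFunDual (gaussianReal 0 1) L = Complex.exp (-(L 1 : ℂ) ^ 2 / 2) := by
  have hL : (L : ℝ → ℝ) = (L 1 * ·) := funext fun x => by
    simpa [mul_comm] using L.map_smul x 1
  rw [charFunDual_eq_charFun_map_one, hL, gaussianReal_map_const_mul, charFun_gaussianReal]
  simp [neg_div]

theorem charFunDual_stdGaussian_eq_sum {n : ℕ} (L : StrongDual ℝ (Fin n → ℝ)) :
    charFunDual (_root_.stdGaussian n) L =
      Complex.exp (-((∑ l, L (Pi.single l 1) ^ 2 : ℝ) : ℂ) / 2) := by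
  simp [_root_.stdGaussian, charFunDual_pi, charFunDual_gaussianReal_zero_one, ← Complex.exp_sum,
    Finset.sum_div, Finset.sum_neg_distrib, neg_div]

theorem charFunDual_pi_stdGaussian {ι : Type*} [Fintype ι] [DecidableEq ι] {n : ℕ}
    (L : StrongDual ℝ (ι → Fin n → ℝ)) :
    charFunDual (Measure.pi fun _ : ι => _root_.stdGaussian n) L =
      Complex.exp (-((∑ l, ∑ i, L (Pi.single i (Pi.single l 1)) ^ 2 : ℝ) : ℂ) / 2) := by
  rw [Finset.sum_comm]
  simp [charFunDual_pi, charFunDual_stdGaussian_eq_sum, ← Complex.exp_sum, Finset.sum_div,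
    Finset.sum_neg_distrib, neg_div]

theorem map_householder_pi_stdGaussian {ι : Type*} [Fintype ι] {n : ℕ} (v : ι → ℝ) :
    (Measure.pi fun _ : ι => _root_.stdGaussian n).map (householder v) =
      Measure.pi fun _ : ι => _root_.stdGaussian n := by
  classical
  have := Measure.isProbabilityMeasure_map (μ := Measure.pi fun _ : ι => _root_.stdGaussian n)
    (householder v).measurable.aemeasurable
  refine Measure.ext_of_charFunDual (funext fun L => ?_)
  rw [charFunDual_map, charFunDual_pi_stdGaussian, charFunDual_pi_stdGaussian]
  simp only [ContinuousLinearMap.comp_apply, map_householder_single, sum_sq_householder]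

theorem measure_le_of_forall_parameter_measure_le {T Ω : Type*} [MeasurableSpace T]
    [MeasurableSpace Ω] {ν : Measure T} {μ : Measure Ω} [IsProbabilityMeasure ν]
    [IsProbabilityMeasure μ] {φ : T → Ω → Ω} (hφ : Measurable (Function.uncurry φ))
    (hμ : ∀ t, μ.map (φ t) = μ) {E : Set Ω} (hE : MeasurableSet E) {c : ℝ≥0∞}
    (h : ∀ ω, ν {t | φ t ω ∈ E} ≤ c) : μ E ≤ c := by
  have hφE : MeasurableSet (Function.uncurry φ ⁻¹' E) := hφ hE
  calc μ E = ∫⁻ _t, μ E ∂ν := by simp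
    _ = ∫⁻ t, μ {ω | φ t ω ∈ E} ∂ν := lintegral_congr fun t => by
        conv_lhs => rw [← hμ t]
        exact Measure.map_apply hφ.of_uncurry_left hE
    _ = ∫⁻ ω, ν {t | φ t ω ∈ E} ∂μ :=
        (Measure.prod_apply hφE).symm.trans (Measure.prod_apply_symm hφE)
    _ ≤ ∫⁻ _ω, c ∂μ := lintegral_mono h
    _ = c := by simp

theorem exists_eval_eq_pow_mul_eval {σ τ K : Type*} [Finite τ] [CommSemiring K]
    {p : MvPolynomial τ K} {D e : ℕ} (hp : p.totalDegree ≤ D) {A : τ → MvPolynomial σ K}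
    {w : MvPolynomial σ K} (hA : ∀ l, (A l).totalDegree ≤ e) (hw : w.totalDegree ≤ e) :
    ∃ P : MvPolynomial σ K, P.totalDegree ≤ D * e ∧ ∀ (t : σ → K) (x : τ → K),
      (∀ l, MvPolynomial.eval t (A l) = MvPolynomial.eval t w * x l) →
        MvPolynomial.eval t P = MvPolynomial.eval t w ^ D * MvPolynomial.eval x p := by
  have := Fintype.ofFinite τ
  have hdeg : ∀ m ∈ p.support, ∑ l, m l ≤ D := fun m hm => by
    have h := (MvPolynomial.le_totalDegree hm).trans hp
    rwa [Finsupp.sum_fintype _ _ fun _ => rfl] at h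
  refine ⟨∑ m ∈ p.support, MvPolynomial.C (p.coeff m) * (w ^ (D - ∑ l, m l) * ∏ l, A l ^ m l),
    MvPolynomial.totalDegree_finsetSum_le fun m hm => ?_, fun t x hx => ?_⟩
  · calc (MvPolynomial.C (p.coeff m) * (w ^ (D - ∑ l, m l) * ∏ l, A l ^ m l)).totalDegree
        ≤ 0 + ((D - ∑ l, m l) * e + ∑ l, m l * e) := by
          refine (MvPolynomial.totalDegree_mul _ _).trans (add_le_add
            (MvPolynomial.totalDegree_C _).le ((MvPolynomial.totalDegree_mul _ _).trans
              (add_le_add ?_ ((MvPolynomial.totalDegree_finsetProd _ _).trans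
                (Finset.sum_le_sum fun l _ => ?_)))))
          · exact (MvPolynomial.totalDegree_pow _ _).trans (by gcongr)
          · exact (MvPolynomial.totalDegree_pow _ _).trans (by gcongr; exact hA l)
      _ = D * e := by rw [zero_add, ← Finset.sum_mul, ← add_mul, Nat.sub_add_cancel (hdeg m hm)]
  · rw [MvPolynomial.eval_eq' x, Finset.mul_sum, map_sum]
    refine Finset.sum_congr rfl fun m hm => ?_
    simp only [map_mul, map_pow, map_prod, MvPolynomial.eval_C, hx, mul_pow,
      Finset.prod_mul_distrib, Finset.prod_pow_eq_pow_sum]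
    rw [← Nat.sub_add_cancel (hdeg m hm), pow_add, Nat.add_sub_cancel]
    ring

theorem hasFDerivAt_mvPolynomial_eval {ι : Type*} [Fintype ι] (p : MvPolynomial ι ℝ) (x : ι → ℝ) :
    HasFDerivAt (fun x => MvPolynomial.eval x p)
      (∑ l, MvPolynomial.eval x (MvPolynomial.pderiv l p) •
        (ContinuousLinearMap.proj l : (ι → ℝ) →L[ℝ] ℝ)) x := by
  classical
  induction p using MvPolynomial.induction_on with
  | C a => simpa using hasFDerivAt_const a x
  | add p q hp hq => simpa [add_smul, Finset.sum_add_distrib] using hp.fun_add hq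
  | mul_X p i hp =>
    simp only [map_mul, MvPolynomial.eval_X]
    refine (hp.mul (hasFDerivAt_apply (𝕜 := ℝ) i x)).congr_fderiv ?_
    simp [MvPolynomial.pderiv_X, Pi.single_apply, apply_ite, add_smul, mul_smul,
      Finset.sum_add_distrib, Finset.smul_sum]

section ReflectedFrame

variable {k : ℕ}

/-- The weight `1 + ∑ i, tᵢ²`, which is the squared length of the vector `(1, t)`. -/
noncomputable def weight (k : ℕ) : MvPolynomial (Fin k) ℝ :=
  1 + ∑ i, MvPolynomial.X i ^ 2

theorem eval_weight (t : Fin k → ℝ) : MvPolynomial.eval t (weight k) = 1 + ∑ i, t i ^ 2 := by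
  simp [weight]

theorem totalDegree_weight_le : (weight k).totalDegree ≤ 2 := by
  refine (MvPolynomial.totalDegree_add _ _).trans (max_le (by simp) ?_)
  exact MvPolynomial.totalDegree_finsetSum_le fun i _ => (MvPolynomial.totalDegree_X_pow i 2).le

theorem one_le_eval_weight (t : Fin k → ℝ) : 1 ≤ MvPolynomial.eval t (weight k) := by
  rw [eval_weight, le_add_iff_nonneg_right]
  positivity

theorem eval_weight_le {t : Fin k → ℝ} (ht : t ∈ Set.Icc (0 : Fin k → ℝ) 1) :
    MvPolynomial.eval t (weight k) ≤ 1 + k := by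
  rw [eval_weight]
  gcongr
  calc ∑ i, t i ^ 2 ≤ ∑ _i : Fin k, (1 : ℝ) :=
        Finset.sum_le_sum fun i _ => pow_le_one₀ (ht.1 i) (ht.2 i)
    _ = k := by simp

variable {E : Type*} [NormedAddCommGroup E] [NormedSpace ℝ E]

/-- The tuple `z` reflected in the hyperplane orthogonal to `(1, t)`. -/
noncomputable def reflectedFrame (t : Fin k → ℝ) : (Fin (k + 1) → E) →L[ℝ] (Fin (k + 1) → E) :=
  householder (Fin.cons 1 t)

theorem reflectedFrame_apply (t : Fin k → ℝ) (z : Fin (k + 1) → E) (i : Fin (k + 1)) :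
    reflectedFrame t z i = z i - (2 * (Fin.cons 1 t : Fin (k + 1) → ℝ) i /
      MvPolynomial.eval t (weight k)) • (z 0 + ∑ j, t j • z j.succ) := by
  have hnorm : (Fin.cons 1 t : Fin (k + 1) → ℝ) ⬝ᵥ Fin.cons 1 t =
      MvPolynomial.eval t (weight k) := by
    simp [dotProduct, Fin.sum_univ_succ, eval_weight, sq]
  simp [reflectedFrame, householder_apply, hnorm, Fin.sum_univ_succ]

theorem continuous_reflectedFrame :
    Continuous fun w : (Fin k → ℝ) × (Fin (k + 1) → E) => reflectedFrame w.1 w.2 := by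
  refine continuous_pi fun i => ?_
  simp only [reflectedFrame_apply, eval_weight]
  have : Continuous fun w : (Fin k → ℝ) × (Fin (k + 1) → E) =>
      (Fin.cons 1 w.1 : Fin (k + 1) → ℝ) i := by
    cases i using Fin.cases with
    | zero => exact continuous_const
    | succ i => exact (continuous_apply i).comp continuous_fst
  refine Continuous.sub (by fun_prop) (Continuous.smul (Continuous.div (by fun_prop)
    (by fun_prop) fun w => ?_) (by fun_prop))
  positivity

theorem hasFDerivAt_reflectedFrame_zero (z : Fin (k + 1) → E) (t : Fin k → ℝ) :
    HasFDerivAt (fun t => reflectedFrame t z 0)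
      (∑ i, (ContinuousLinearMap.proj i : (Fin k → ℝ) →L[ℝ] ℝ).smulRight
        (-(2 / MvPolynomial.eval t (weight k)) • reflectedFrame t z i.succ)) t := by
  have hw : MvPolynomial.eval t (weight k) ≠ 0 := (one_pos.trans_le (one_le_eval_weight t)).ne'
  have hsum : HasFDerivAt (fun t : Fin k → ℝ => z 0 + ∑ j, t j • z j.succ)
      (∑ j, (ContinuousLinearMap.proj j : (Fin k → ℝ) →L[ℝ] ℝ).smulRight (z j.succ)) t :=
    (HasFDerivAt.fun_sum fun j _ =>
      (hasFDerivAt_apply (𝕜 := ℝ) j t).smul_const (z j.succ)).const_add (z 0)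
  have hweight : HasFDerivAt (fun t : Fin k → ℝ => MvPolynomial.eval t (weight k))
      (∑ j, (2 * t j) • (ContinuousLinearMap.proj j : (Fin k → ℝ) →L[ℝ] ℝ)) t := by
    simp only [eval_weight]
    refine ((HasFDerivAt.fun_sum fun j _ =>
      (hasFDerivAt_apply (𝕜 := ℝ) j t).pow 2).const_add 1).congr_fderiv ?_
    simp
  have hinv := ((hasDerivAt_inv hw).comp_hasFDerivAt t hweight).const_mul 2
  simp only [reflectedFrame_apply, Fin.cons_zero, Fin.cons_succ, mul_one, div_eq_mul_inv]
  refine ((hinv.smul hsum).const_sub (z 0)).congr_fderiv ?_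
  refine ContinuousLinearMap.ext fun v => ?_
  generalize z 0 + ∑ j, t j • z j.succ = s
  simp only [neg_apply, add_apply, sum_apply, smul_apply,
    ContinuousLinearMap.smulRight_apply, ContinuousLinearMap.proj_apply, Finset.smul_sum,
    Finset.sum_smul, smul_sub, neg_smul, smul_neg, Finset.sum_sub_distrib, smul_smul,
    Finset.sum_neg_distrib, Function.comp_apply, smul_eq_mul]
  rw [neg_add']
  exact congrArg₂ (· - ·)
    (congrArg Neg.neg (Finset.sum_congr rfl fun i _ => congrArg (· • _) (by ring)))
    (Finset.sum_congr rfl fun i _ => congrArg (· • _) (by ring))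

end ReflectedFrame

section GradientMatrix

variable {n k D : ℕ}

/-- The matrix `M` of the pairings `⟨∇pʲ(X), Yⁱ⟩`, as a function of the frame
`z = (X, Y¹, …, Yᵏ)`. -/
noncomputable def gradientMatrix (p : Fin k → MvPolynomial (Fin n) ℝ)
    (z : Fin (k + 1) → Fin n → ℝ) : Matrix (Fin k) (Fin k) ℝ :=
  Matrix.of fun i j => ∑ l, MvPolynomial.eval (z 0) (MvPolynomial.pderiv l (p j)) * z i.succ l

/-- The event `∏ |pⁱ(X)| < ε |det M|`, as a set of frames `(X, Y¹, …, Yᵏ)`. -/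
def smallProductEvent (p : Fin k → MvPolynomial (Fin n) ℝ) (ε : ℝ) :
    Set (Fin (k + 1) → Fin n → ℝ) :=
  {z | ∏ i, |MvPolynomial.eval (z 0) (p i)| < ε * |(gradientMatrix p z).det|}

theorem measurableSet_smallProductEvent (p : Fin k → MvPolynomial (Fin n) ℝ) (ε : ℝ) :
    MeasurableSet (smallProductEvent p ε) := by
  have heval (q : MvPolynomial (Fin n) ℝ) :
      Continuous fun z : Fin (k + 1) → Fin n → ℝ => MvPolynomial.eval (z 0) q :=
    (MvPolynomial.continuous_eval q).comp (continuous_apply 0)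
  have hmatrix : Continuous (gradientMatrix p) :=
    continuous_matrix fun i j => continuous_finsetSum Finset.univ fun l _ =>
      (heval (MvPolynomial.pderiv l (p j))).mul (continuous_apply_apply i.succ l)
  exact (isOpen_lt (continuous_finsetProd _ fun i _ => (heval (p i)).abs)
    (continuous_const.mul hmatrix.matrix_det.abs)).measurableSet

variable (p : Fin k → MvPolynomial (Fin n) ℝ) (z : Fin (k + 1) → Fin n → ℝ)

theorem hasFDerivAt_eval_reflectedFrame (t : Fin k → ℝ) :
    HasFDerivAt (fun t j => MvPolynomial.eval (reflectedFrame t z 0) (p j))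
      (Matrix.toLin' (-(2 / MvPolynomial.eval t (weight k)) •
        (gradientMatrix p (reflectedFrame t z)).transpose)).toContinuousLinearMap t := by
  refine hasFDerivAt_pi'.2 fun j => ((hasFDerivAt_mvPolynomial_eval (p j) _).comp t
    (hasFDerivAt_reflectedFrame_zero z t)).congr_fderiv (ContinuousLinearMap.ext fun v => ?_)
  simp only [ContinuousLinearMap.comp_apply, sum_apply, smul_apply,
    ContinuousLinearMap.proj_apply, ContinuousLinearMap.smulRight_apply, Finset.sum_apply,
    LinearMap.coe_toContinuousLinearMap', Matrix.toLin'_apply, Matrix.smul_mulVec,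
    Pi.smul_apply, smul_eq_mul, Matrix.mulVec, dotProduct, Matrix.transpose_apply,
    gradientMatrix, Matrix.of_apply, Finset.mul_sum, Finset.sum_mul]
  rw [Finset.sum_comm]
  exact Finset.sum_congr rfl fun i _ => Finset.sum_congr rfl fun l _ => by ring

theorem abs_det_gradientMatrix_reflectedFrame_le {t : Fin k → ℝ}
    (ht : t ∈ Set.Icc (0 : Fin k → ℝ) 1) :
    |(gradientMatrix p (reflectedFrame t z)).det| ≤ (1 + k : ℝ) ^ k *
      |(fderiv ℝ (fun t j => MvPolynomial.eval (reflectedFrame t z 0) (p j)) t).det| := by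
  have hw : 0 < MvPolynomial.eval t (weight k) := one_pos.trans_le (one_le_eval_weight t)
  rw [(hasFDerivAt_eval_reflectedFrame p z t).fderiv, LinearMap.det_toContinuousLinearMap,
    LinearMap.det_toLin', Matrix.det_smul, Matrix.det_transpose, Fintype.card_fin, abs_mul,
    abs_pow, abs_neg, abs_of_pos (div_pos two_pos hw), ← mul_assoc, ← mul_pow]
  refine le_mul_of_one_le_left (abs_nonneg _) (one_le_pow₀ ?_)
  rw [mul_div_assoc', le_div_iff₀ hw]
  linarith [eval_weight_le ht]

theorem exists_eval_eq_weight_pow_mul_eval_reflectedFrame {p : MvPolynomial (Fin n) ℝ}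
    (hp : p.totalDegree ≤ D) : ∃ P : MvPolynomial (Fin k) ℝ, P.totalDegree ≤ D * 2 ∧
      ∀ t, MvPolynomial.eval t P =
        MvPolynomial.eval t (weight k ^ D) * MvPolynomial.eval (reflectedFrame t z 0) p := by
  let A (l : Fin n) : MvPolynomial (Fin k) ℝ := weight k * MvPolynomial.C (z 0 l) +
    MvPolynomial.C (-2) *
      (MvPolynomial.C (z 0 l) + ∑ j, MvPolynomial.X j * MvPolynomial.C (z j.succ l))
  have hA (l : Fin n) : (A l).totalDegree ≤ 2 := by
    have hlinear : (∑ j : Fin k, MvPolynomial.X j *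
        MvPolynomial.C (z j.succ l) : MvPolynomial (Fin k) ℝ).totalDegree ≤ 1 :=
      MvPolynomial.totalDegree_finsetSum_le fun j _ =>
        (MvPolynomial.totalDegree_mul _ _).trans (by simp)
    refine (MvPolynomial.totalDegree_add _ _).trans (max_le
      ((MvPolynomial.totalDegree_mul _ _).trans ?_) ((MvPolynomial.totalDegree_mul _ _).trans ?_))
    · simpa using totalDegree_weight_le
    · rw [MvPolynomial.totalDegree_C, zero_add]
      exact (MvPolynomial.totalDegree_add _ _).trans (max_le (by simp) (hlinear.trans one_le_two))
  obtain ⟨P, hP, hPeval⟩ := exists_eval_eq_pow_mul_eval hp hA totalDegree_weight_le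
  refine ⟨P, hP, fun t => ?_⟩
  rw [map_pow]
  refine hPeval t _ fun l => ?_
  have hw : MvPolynomial.eval t (weight k) ≠ 0 := (one_pos.trans_le (one_le_eval_weight t)).ne'
  simp only [A, reflectedFrame_apply, Fin.cons_zero, map_add, map_mul, map_sum,
    MvPolynomial.eval_C, MvPolynomial.eval_X, Pi.sub_apply, Pi.smul_apply, Pi.add_apply,
    Finset.sum_apply, smul_eq_mul, mul_one]
  field_simp
  ring

theorem uniformCube_reflectedFrame_mem_smallProductEvent_le {p : Fin k → MvPolynomial (Fin n) ℝ}
    (hp : ∀ i, (p i).totalDegree ≤ D) {ε : ℝ} (hε : 0 < ε) (hε1 : ε ≤ 1) :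
    uniformCube k {t | reflectedFrame t z ∈ smallProductEvent p ε} ≤
      k * (k * ENNReal.ofReal (2 * (D * 2 : ℕ) * ε)) +
        (((D * 2 * k + 1) ^ k) ^ k : ℕ) * (ENNReal.ofReal ((1 + k) ^ k * ε) *
          ENNReal.ofReal (2 * Real.log
            ((1 + k) ^ D / (ε ^ (D * 2) / ((D * 2 : ℕ) + 1)) ^ k)) ^ k) := by
  choose P hP hPeval using fun i =>
    exists_eval_eq_weight_pow_mul_eval_reflectedFrame z (hp i)
  have hW : (weight k ^ D).totalDegree ≤ D * 2 :=
    (MvPolynomial.totalDegree_pow _ _).trans (by gcongr; exact totalDegree_weight_le)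
  refine le_trans (measure_mono_ae ?_) (uniformCube_prod_abs_lt_det_fderiv_le
    (fun t => (hasFDerivAt_eval_reflectedFrame p z t).differentiableAt) hP hW
    (fun t => ?_) (fun t ht => ?_) (fun t i => hPeval i t) hε hε1 ((1 + k) ^ k * ε))
  · rw [uniformCube_eq_restrict]
    filter_upwards [ae_restrict_mem measurableSet_Icc] with t ht hmem
    calc ∏ i, |MvPolynomial.eval (reflectedFrame t z 0) (p i)|
        < ε * |(gradientMatrix p (reflectedFrame t z)).det| := hmem
      _ ≤ ε * ((1 + k : ℝ) ^ k * _) := by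
          gcongr; exact abs_det_gradientMatrix_reflectedFrame_le p z ht
      _ = _ := by ring
  · rw [map_pow]
    exact one_le_pow₀ (one_le_eval_weight t)
  · rw [map_pow]
    exact pow_le_pow_left₀ (zero_le_one.trans (one_le_eval_weight t)) (eval_weight_le ht) D

end GradientMatrix

theorem log_two_le_log_one_div {ε : ℝ} (hε : 0 < ε) (hε2 : ε ≤ 1 / 2) :
    Real.log 2 ≤ Real.log (1 / ε) :=
  Real.log_le_log two_pos ((le_one_div two_pos hε).2 hε2)

theorem exists_forall_log_div_pow_le_mul_log (k d : ℕ) {B : ℝ} (hB : 1 ≤ B) :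
    ∃ c : ℝ, 0 ≤ c ∧ ∀ ε : ℝ, 0 < ε → ε < 1 / 2 →
      Real.log (B / (ε ^ d / (d + 1)) ^ k) ≤ c * Real.log (1 / ε) := by
  have hconst : 0 ≤ Real.log (B * (d + 1) ^ k) :=
    Real.log_nonneg (one_le_mul_of_one_le_of_one_le hB (one_le_pow₀ (by simp)))
  have hlog2 := Real.log_pos one_lt_two
  refine ⟨Real.log (B * (d + 1) ^ k) / Real.log 2 + d * k, by positivity, fun ε hε hε2 => ?_⟩
  have hlog := log_two_le_log_one_div hε hε2.le
  have : 0 < B := one_pos.trans_le hB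
  calc Real.log (B / (ε ^ d / (d + 1)) ^ k)
      = Real.log (B * (d + 1) ^ k * (1 / ε) ^ (d * k)) := by
        rw [div_pow, div_div_eq_mul_div, one_div, inv_pow, pow_mul, ← div_eq_mul_inv]
    _ = Real.log (B * (d + 1) ^ k) / Real.log 2 * Real.log 2 + d * k * Real.log (1 / ε) := by
        rw [Real.log_mul (by positivity) (by positivity), Real.log_pow, Nat.cast_mul,
          div_mul_cancel₀ _ hlog2.ne']
    _ ≤ Real.log (B * (d + 1) ^ k) / Real.log 2 * Real.log (1 / ε) +
          d * k * Real.log (1 / ε) := by gcongr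
    _ = _ := by ring

theorem exists_forall_add_mul_log_pow_le (k d N : ℕ) {A B : ℝ} (hA : 0 ≤ A) (hB : 1 ≤ B) :
    ∃ C : ℝ, 0 < C ∧ ∀ ε : ℝ, 0 < ε → ε < 1 / 2 →
      k * (k * ENNReal.ofReal (2 * d * ε)) + N * (ENNReal.ofReal (A * ε) *
        ENNReal.ofReal (2 * Real.log (B / (ε ^ d / (d + 1)) ^ k)) ^ k) ≤
          ENNReal.ofReal (C * ε * Real.log (1 / ε) ^ k) := by
  obtain ⟨c, hc, hlog_le⟩ := exists_forall_log_div_pow_le_mul_log k d hB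
  have hlog2 := Real.log_pos one_lt_two
  refine ⟨k * (k * (2 * d)) / Real.log 2 ^ k + N * (A * (2 * c) ^ k) + 1, by positivity,
    fun ε hε hε2 => ?_⟩
  have hlog := log_two_le_log_one_div hε hε2.le
  have hlog0 := hlog2.trans_le hlog
  set ℓ := Real.log (1 / ε)
  calc _ ≤ k * (k * ENNReal.ofReal (2 * d * ε)) + N * (ENNReal.ofReal (A * ε) *
        ENNReal.ofReal (2 * (c * ℓ)) ^ k) := by gcongr; exact hlog_le ε hε hε2
    _ = ENNReal.ofReal (k * (k * (2 * d * ε)) + N * (A * ε * (2 * (c * ℓ)) ^ k)) := by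
        rw [ENNReal.ofReal_add (by positivity) (by positivity),
          ENNReal.ofReal_mul (p := k) (by positivity), ENNReal.ofReal_mul (p := k) (by positivity),
          ENNReal.ofReal_mul (p := N) (by positivity),
          ENNReal.ofReal_mul (p := A * ε) (by positivity), ENNReal.ofReal_pow (by positivity),
          ENNReal.ofReal_natCast, ENNReal.ofReal_natCast]
    _ ≤ _ := ENNReal.ofReal_le_ofReal ?_
  calc k * (k * (2 * d * ε)) + N * (A * ε * (2 * (c * ℓ)) ^ k)
      = k * (k * (2 * d)) / Real.log 2 ^ k * ε * Real.log 2 ^ k +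
          N * (A * (2 * c) ^ k) * ε * ℓ ^ k := by
        rw [← mul_assoc 2 c, mul_pow (2 * c)]
        field_simp
    _ ≤ k * (k * (2 * d)) / Real.log 2 ^ k * ε * ℓ ^ k +
          N * (A * (2 * c) ^ k) * ε * ℓ ^ k + 1 * ε * ℓ ^ k := by
        rw [add_assoc]
        gcongr
        exact le_add_of_nonneg_right (by positivity)
    _ = _ := by ring

/-- For every positive `k` and positive integers `d₁, …, d_k` there is a constant `C` depending
only on `k` and `d₁ + ⋯ + d_k` such that for polynomials `pⁱ` of degree at most `dᵢ` and
`0 < ε < 1/2`, `Pr(∏ |pⁱ(X)| < ε |det(⟨∇p^j(X), Yⁱ⟩)_{ij}|) ≤ C ε log(1/ε)^k`. -/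
theorem strong_anticoncentration_cor (k : ℕ) (hk : 0 < k) (D : ℕ) :
    ∃ C : ℝ, 0 < C ∧
      ∀ (n : ℕ) (d : Fin k → ℕ), (∀ i, 0 < d i) → (∑ i, d i) = D →
        ∀ p : Fin k → MvPolynomial (Fin n) ℝ, (∀ i, (p i).totalDegree ≤ d i) →
          ∀ (ε : ℝ), 0 < ε → ε < 1 / 2 →
            ((stdGaussian n).prod (Measure.pi fun _ : Fin k => stdGaussian n))
                {ω | (∏ i, |MvPolynomial.eval ω.1 (p i)|) <
                  ε * |Matrix.det (Matrix.of fun i j : Fin k =>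
                    ∑ l, MvPolynomial.eval ω.1 (MvPolynomial.pderiv l (p j)) * ω.2 i l)|} ≤
              ENNReal.ofReal (C * ε * Real.log (1 / ε) ^ k) := by
  obtain ⟨C, hC, hbound⟩ := exists_forall_add_mul_log_pow_le k (D * 2)
    (((D * 2 * k + 1) ^ k) ^ k) (A := (1 + k) ^ k) (B := (1 + k) ^ D) (by positivity)
    (one_le_pow₀ (by simp))
  refine ⟨C, hC, fun n d _ hd p hp ε hε hε2 => ?_⟩
  have hpD (i : Fin k) : (p i).totalDegree ≤ D :=
    (hp i).trans (hd ▸ Finset.single_le_sum (fun _ _ => Nat.zero_le _) (Finset.mem_univ i))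
  have hfixed (z : Fin (k + 1) → Fin n → ℝ) :
      uniformCube k {t | reflectedFrame t z ∈ smallProductEvent p ε} ≤
        ENNReal.ofReal (C * ε * Real.log (1 / ε) ^ k) :=
    (uniformCube_reflectedFrame_mem_smallProductEvent_le z hpD hε (by linarith)).trans
      (hbound ε hε hε2)
  refine (measure_pi_finSucc (fun _ => stdGaussian n) (smallProductEvent p ε)).symm.trans_le ?_
  exact measure_le_of_forall_parameter_measure_le continuous_reflectedFrame.measurable
    (fun t => map_householder_pi_stdGaussian _) (measurableSet_smallProductEvent p ε) hfixed
end

section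
/- For every positive integer k there is a constant C_k > 0 with the following property. Let B be an n₁ × n₂ real matrix and ε > 0. Define the antisymmetrized tensor W with entries W_{i₁…i_k, j₁…j_k} := Σ_{σ ∈ S_k} sgn(σ) ∏_{l=1}^k B_{i_{σ(l)} j_l}, indexed by i₁,…,i_k ∈ {1,…,n₁} and j₁,…,j_k ∈ {1,…,n₂}, and suppose that (Σ_{i₁,…,i_k, j₁,…,j_k} W_{i₁…i_k, j₁…j_k}²)^{1/2} < ε^k. Then there exist vectors V¹, …, V^{k−1} ∈ ℝ^{n₁} and W¹, …, W^{k−1} ∈ ℝ^{n₂} such that the Frobenius norm satisfies ‖B − Σ_{ℓ=1}^{k−1} V^ℓ (W^ℓ)^T‖_F ≤ C_k·ε. -/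
/-!
A determinant bordered by one further row and column is the original determinant times an entry
of the Schur complement, i.e. of the residual of the rank-`r` approximation of `B` built from the
`r` chosen rows and columns. With `S r` the sum of the `p`-th powers of the minors of order `r`,
summing over all choices shows that `S (r + 1)` dominates the sum over the minors of order `r`, each
weighted by the size of its residual; so some residual has size at most `S (r + 1) / S r`. As
`S 0 = 1` and `S (k + 1) ≤ (ε ^ p) ^ (k + 1)`, one of these ratios with `r ≤ k` is at most `ε ^ p`.
-/

open Matrix

theorem exists_le_succ_le_mul_of_le_pow {R : Type*} [Semiring R] [LinearOrder R]
    [IsStrictOrderedRing R] {s : ℕ → R} {e : R} (he : 0 ≤ e) (hs : 1 ≤ s 0) {k : ℕ}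
    (h : s (k + 1) ≤ e ^ (k + 1)) : ∃ r ≤ k, 0 < s r ∧ s (r + 1) ≤ e * s r := by
  induction k with
  | zero =>
    refine ⟨0, le_rfl, zero_lt_one.trans_le hs, ?_⟩
    calc s 1 ≤ e := by simpa using h
      _ ≤ e * s 0 := le_mul_of_one_le_right he hs
  | succ k ih =>
    rcases le_or_gt (s (k + 1)) (e ^ (k + 1)) with hle | hlt
    · obtain ⟨r, hr, hrs⟩ := ih hle
      exact ⟨r, hr.trans k.le_succ, hrs⟩
    · refine ⟨k + 1, le_rfl, (pow_nonneg he _).trans_lt hlt, ?_⟩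
      calc s (k + 2) ≤ e * e ^ (k + 1) := by rwa [← pow_succ']
        _ ≤ e * s (k + 1) := mul_le_mul_of_nonneg_left hlt.le he

theorem snoc_comp_finSumFinEquiv {α : Type*} {k : ℕ} (f : Fin k → α) (a : α) :
    (Fin.snoc f a : Fin (k + 1) → α) ∘ finSumFinEquiv = Sum.elim f fun _ : Fin 1 ↦ a := by
  rw [← Fin.append_right_eq_snoc f fun _ ↦ a]
  exact Fin.append_comp_sumElim

theorem sum_fin_succ_arrow {α M : Type*} [Fintype α] [AddCommMonoid M] {k : ℕ}
    (f : (Fin (k + 1) → α) → M) :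
    ∑ i, f i = ∑ i : Fin k → α, ∑ x, f (Fin.snoc i x) := by
  rw [← (Fin.snocEquiv fun _ ↦ α).sum_comp, Fintype.sum_prod_type_right]
  rfl

theorem exists_mul_eq_mul_of_le {m n R : Type*} [Semiring R] {r k : ℕ} (hrk : r ≤ k)
    (V : Matrix m (Fin r) R) (W : Matrix (Fin r) n R) :
    ∃ (V' : Matrix m (Fin k) R) (W' : Matrix (Fin k) n R), V' * W' = V * W := by
  obtain ⟨d, rfl⟩ := Nat.exists_eq_add_of_le hrk
  refine ⟨(fromCols V (0 : Matrix m (Fin d) R)).submatrix id finSumFinEquiv.symm,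
    (fromRows W (0 : Matrix (Fin d) n R)).submatrix finSumFinEquiv.symm id, ?_⟩
  rw [submatrix_mul_equiv, fromCols_mul_fromRows, Matrix.zero_mul, add_zero, submatrix_id_id]

section CrossApproximation

variable {R m n ι κ : Type*} [CommRing R] [Fintype ι] [DecidableEq ι]

/-- The cross (or skeleton) approximation of `A` through the rows `i` and the columns `j`, of rank
at most the number of rows chosen. The difference `A - crossApprox A i j` is the Schur complement
of the pivot block `A.submatrix i j`. If that block is not invertible, its `⁻¹` is `0`, and so is
the approximation. -/
noncomputable def crossApprox (A : Matrix m n R) (i : ι → m) (j : ι → n) : Matrix m n R :=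
  A.submatrix id j * (A.submatrix i j)⁻¹ * A.submatrix i id

theorem det_submatrix_sumElim [Fintype κ] [DecidableEq κ] (A : Matrix m n R) {i : ι → m}
    {j : ι → n} (h : IsUnit (A.submatrix i j).det) (i' : κ → m) (j' : κ → n) :
    (A.submatrix (Sum.elim i i') (Sum.elim j j')).det =
      (A.submatrix i j).det * ((A - crossApprox A i j).submatrix i' j').det := by
  have h_blocks : A.submatrix (Sum.elim i i') (Sum.elim j j') =
      fromBlocks (A.submatrix i j) (A.submatrix i j') (A.submatrix i' j) (A.submatrix i' j') := by
    ext (a | a) (b | b) <;> rfl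
  have := invertibleOfIsUnitDet _ h
  rw [h_blocks, det_fromBlocks₁₁, invOf_eq_nonsing_inv]
  rfl

theorem det_submatrix_snoc {k : ℕ} (A : Matrix m n R) {i : Fin k → m} {j : Fin k → n}
    (h : IsUnit (A.submatrix i j).det) (x : m) (y : n) :
    (A.submatrix (Fin.snoc i x : Fin (k + 1) → m) (Fin.snoc j y : Fin (k + 1) → n)).det =
      (A.submatrix i j).det * (A - crossApprox A i j) x y := by
  rw [← det_submatrix_equiv_self finSumFinEquiv, submatrix_submatrix,
    snoc_comp_finSumFinEquiv, snoc_comp_finSumFinEquiv, det_submatrix_sumElim A h,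
    det_fin_one, submatrix_apply]

end CrossApproximation

section PowerSums

variable {𝕜 m n : Type*} [NormedField 𝕜] [Fintype m] [Fintype n]

/-- The `p`-th power of the entrywise `ℓ^p` norm of a matrix; for `p = 2`, the squared Frobenius
norm. -/
noncomputable def entryPowSum (p : ℝ) (A : Matrix m n 𝕜) : ℝ :=
  ∑ x, ∑ y, ‖A x y‖ ^ p

/-- The sum of the `p`-th powers of the absolute values of the minors of order `k`. Rows and columns
are indexed by arbitrary `k`-tuples, so each minor is counted `(k !) ^ 2` times, and the tuples with
a repetition contribute `0` when `p ≠ 0`. -/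
noncomputable def minorPowSum (p : ℝ) (k : ℕ) (A : Matrix m n 𝕜) : ℝ :=
  ∑ i : Fin k → m, ∑ j : Fin k → n, ‖(A.submatrix i j).det‖ ^ p

theorem entryPowSum_nonneg (p : ℝ) (A : Matrix m n 𝕜) : 0 ≤ entryPowSum p A := by
  unfold entryPowSum
  positivity

theorem minorPowSum_nonneg (p : ℝ) (k : ℕ) (A : Matrix m n 𝕜) : 0 ≤ minorPowSum p k A := by
  unfold minorPowSum
  positivity

theorem minorPowSum_zero (p : ℝ) (A : Matrix m n 𝕜) : minorPowSum p 0 A = 1 := by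
  simp [minorPowSum]

theorem minorPowSum_succ (p : ℝ) (k : ℕ) (A : Matrix m n 𝕜) :
    minorPowSum p (k + 1) A = ∑ i : Fin k → m, ∑ j : Fin k → n, ∑ x, ∑ y,
      ‖(A.submatrix (Fin.snoc i x : Fin (k + 1) → m)
        (Fin.snoc j y : Fin (k + 1) → n)).det‖ ^ p := by
  simp only [minorPowSum, sum_fin_succ_arrow (k := k)]
  exact Finset.sum_congr rfl fun i _ ↦ Finset.sum_comm

variable {p : ℝ} {k : ℕ}

theorem norm_det_rpow_mul_entryPowSum_le (hp : p ≠ 0) (A : Matrix m n 𝕜) (i : Fin k → m)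
    (j : Fin k → n) :
    ‖(A.submatrix i j).det‖ ^ p * entryPowSum p (A - crossApprox A i j) ≤
      ∑ x, ∑ y, ‖(A.submatrix (Fin.snoc i x : Fin (k + 1) → m)
        (Fin.snoc j y : Fin (k + 1) → n)).det‖ ^ p := by
  rcases eq_or_ne (A.submatrix i j).det 0 with hdet | hdet
  · rw [hdet, norm_zero, Real.zero_rpow hp, zero_mul]
    positivity
  · simp only [entryPowSum, det_submatrix_snoc A hdet.isUnit, norm_mul,
      Real.mul_rpow (norm_nonneg _) (norm_nonneg _), ← Finset.mul_sum, le_refl]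

theorem exists_minorPowSum_mul_entryPowSum_le (hp : p ≠ 0) {A : Matrix m n 𝕜}
    (hA : minorPowSum p k A ≠ 0) :
    ∃ (i : Fin k → m) (j : Fin k → n),
      minorPowSum p k A * entryPowSum p (A - crossApprox A i j) ≤ minorPowSum p (k + 1) A := by
  obtain ⟨i₀, -, hi₀⟩ := Finset.exists_ne_zero_of_sum_ne_zero hA
  obtain ⟨j₀, -, -⟩ := Finset.exists_ne_zero_of_sum_ne_zero hi₀
  have : Nonempty ((Fin k → m) × (Fin k → n)) := ⟨(i₀, j₀)⟩
  obtain ⟨⟨i, j⟩, hmin⟩ := Finite.exists_min fun q : (Fin k → m) × (Fin k → n) ↦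
    entryPowSum p (A - crossApprox A q.1 q.2)
  refine ⟨i, j, ?_⟩
  rw [minorPowSum_succ, minorPowSum]
  simp only [Finset.sum_mul]
  gcongr with i' _ j' _
  calc ‖(A.submatrix i' j').det‖ ^ p * entryPowSum p (A - crossApprox A i j)
      ≤ ‖(A.submatrix i' j').det‖ ^ p * entryPowSum p (A - crossApprox A i' j') :=
        mul_le_mul_of_nonneg_left (hmin (i', j')) (by positivity)
    _ ≤ _ := norm_det_rpow_mul_entryPowSum_le hp A i' j'

theorem exists_entryPowSum_sub_mul_le (hp : p ≠ 0) {A : Matrix m n 𝕜} {e : ℝ} (he : 0 ≤ e)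
    (h : minorPowSum p (k + 1) A ≤ e ^ (k + 1)) :
    ∃ (V : Matrix m (Fin k) 𝕜) (W : Matrix (Fin k) n 𝕜), entryPowSum p (A - V * W) ≤ e := by
  obtain ⟨r, hrk, hpos, hratio⟩ :=
    exists_le_succ_le_mul_of_le_pow (s := fun r ↦ minorPowSum p r A) he
      (minorPowSum_zero p A).ge h
  obtain ⟨i, j, hij⟩ := exists_minorPowSum_mul_entryPowSum_le hp hpos.ne'
  obtain ⟨V, W, hVW⟩ := exists_mul_eq_mul_of_le hrk
    (A.submatrix id j * (A.submatrix i j)⁻¹) (A.submatrix i id)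
  refine ⟨V, W, le_of_mul_le_mul_left ?_ hpos⟩
  rw [hVW, mul_comm _ e]
  exact hij.trans hratio

end PowerSums

theorem low_rank_lemma_general {𝕜 m n : Type*} [NormedField 𝕜] [Fintype m] [Fintype n] {p : ℝ}
    (hp : 0 < p) (k : ℕ) (B : Matrix m n 𝕜) {ε : ℝ} (hε : 0 ≤ ε)
    (h : (∑ i : Fin (k + 1) → m, ∑ j : Fin (k + 1) → n,
      ‖(B.submatrix i j).det‖ ^ p) ^ p⁻¹ ≤ ε ^ (k + 1)) :
    ∃ (V : Matrix m (Fin k) 𝕜) (W : Matrix (Fin k) n 𝕜),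
      (∑ i, ∑ j, ‖(B - V * W) i j‖ ^ p) ^ p⁻¹ ≤ ε := by
  have hminors : minorPowSum p (k + 1) B ≤ (ε ^ p) ^ (k + 1) := by
    rw [Real.rpow_pow_comm hε]
    exact (Real.rpow_inv_le_iff_of_pos (minorPowSum_nonneg p _ B) (by positivity) hp).mp h
  obtain ⟨V, W, hVW⟩ := exists_entryPowSum_sub_mul_le hp.ne' (by positivity) hminors
  exact ⟨V, W, (Real.rpow_inv_le_iff_of_pos (entryPowSum_nonneg p _) hε hp).mpr hVW⟩

/-- **Low-rank approximation lemma.**  For every positive integer `k` there is a constant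
`C_k > 0` such that: if `B` is an `n₁ × n₂` real matrix and `ε > 0` satisfy that the
antisymmetrized tensor `W_{i₁…i_k, j₁…j_k} = ∑_{σ ∈ S_k} sgn(σ) ∏ₗ B_{i_{σ(l)} j_l}` has
`L²` norm `< ε^k`, then `B` is within `C_k · ε` in Frobenius norm of a sum of `k - 1`
rank-one matrices. -/
theorem low_rank_lemma (k : ℕ) (hk : 0 < k) :
    ∃ C : ℝ, 0 < C ∧
      ∀ (n₁ n₂ : ℕ) (B : Matrix (Fin n₁) (Fin n₂) ℝ) (ε : ℝ), 0 < ε →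
        Real.sqrt (∑ i : Fin k → Fin n₁, ∑ j : Fin k → Fin n₂,
            (∑ σ : Equiv.Perm (Fin k),
              ((Equiv.Perm.sign σ : ℤ) : ℝ) * ∏ l, B (i (σ l)) (j l)) ^ 2) < ε ^ k →
        ∃ (V : Fin (k - 1) → Fin n₁ → ℝ) (W : Fin (k - 1) → Fin n₂ → ℝ),
          Real.sqrt (∑ i, ∑ j, (B i j - ∑ ℓ, V ℓ i * W ℓ j) ^ 2) ≤ C * ε := by
  obtain ⟨k, rfl⟩ := Nat.exists_eq_succ_of_ne_zero hk.ne'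
  refine ⟨1, one_pos, fun n₁ n₂ B ε hε h ↦ ?_⟩
  obtain ⟨V, W, hVW⟩ := low_rank_lemma_general two_pos k B hε.le
    (by simpa [Real.sqrt_eq_rpow, det_apply'] using h.le)
  exact ⟨Vᵀ, W, by simpa [Real.sqrt_eq_rpow, mul_apply] using hVW⟩
end

section
/- There exist constants c₀ > 0 and C > 0 depending only on m and d with the following property. Let (h, q₁, …, q_m) be an (ε, N)-diffuse decomposition of size m of a degree-d polynomial p : ℝⁿ → ℝ, with 0 < ε < 1/2 and N·ε·log(1/ε) < c₀. Then |h|₂ ≤ C·N^d·|p|₂, where |h|₂ denotes the L² norm of h with respect to the standard Gaussian measure on ℝᵐ and |p|₂ the L² norm of p with respect to the standard Gaussian measure on ℝⁿ. -/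
open MeasureTheory ProbabilityTheory

/-- The Gaussian `L²` norm of a polynomial on `ℝⁿ`. -/
noncomputable def gaussL2 {n : ℕ} (p : MvPolynomial (Fin n) ℝ) : ℝ :=
  Real.sqrt (∫ x, (MvPolynomial.eval x p) ^ 2 ∂(stdGaussian n))

/-- `(h, q)` is a decomposition of the degree-`d` polynomial `p`. -/
def IsDecomposition {n m : ℕ} (d : ℕ) (p : MvPolynomial (Fin n) ℝ)
    (h : MvPolynomial (Fin m) ℝ) (q : Fin m → MvPolynomial (Fin n) ℝ) : Prop :=
  MvPolynomial.aeval q h = p ∧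
    ∀ a ∈ h.support, (∑ i, a i * (q i).totalDegree) ≤ d

/-- `(q₁, …, q_m)` is an `(ε, N)`-diffuse set. -/
def IsDiffuseSet {n : ℕ} (m : ℕ) (ε N : ℝ) (q : Fin m → MvPolynomial (Fin n) ℝ) : Prop :=
  (∀ i, ∫ x, (MvPolynomial.eval x (q i)) ^ 2 ∂(stdGaussian n) ≤ 1) ∧
    ∀ a : Fin m → ℝ,
      stdGaussian n {x | ∀ i, |MvPolynomial.eval x (q i) - a i| ≤ ε} ≤
        ENNReal.ofReal (ε ^ m * N)

/-!
Off its complex roots a univariate polynomial `f` satisfies `f' / f = ∑ 1 / (t - a)`, so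
`|f'| ≤ K |f|` outside a set of measure `O(1 / K)`. Slicing along the coordinate directions and
iterating over derivatives, outside a set of volume `O(1 / K)` in a fixed ball every point `w` is
*tame* for `h`: each iterated partial derivative is at most `K` times the previous one. At a tame
point Taylor expansion shows that `h` is within a factor `2` of `h w` at distances much smaller
than `1 / K`, and that `|h x| ≤ K ^ d * |h w| * B x ^ d` for a fixed polynomial `B`, whence
`gaussL2 h ≤ O(K ^ d) * |h w|`.

By diffuseness of `Q = (q₁, …, q_m)`, the ball of radius `ε` around `Q x` lies entirely inside a set
of volume `v` with probability at most `N v`. So for a suitable `K` of order `N`, with probability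
at least `1 / 2` that ball contains a tame point, and then `gaussL2 h ≤ O(N ^ d) * |h (Q x)|`, where
`h (Q x) = p x`. Markov's inequality turns this into the bound by `gaussL2 p`.
-/

section PolynomialsOnLines

open MvPolynomial

variable {σ R : Type*} [CommSemiring R]

lemma totalDegree_pderiv_le (i : σ) (g : MvPolynomial σ R) :
    (pderiv i g).totalDegree ≤ g.totalDegree - 1 := by
  classical
  conv_lhs => rw [g.as_sum, map_sum]
  refine totalDegree_finsetSum_le fun s hs => ?_
  rw [pderiv_monomial]
  by_cases hsi : s i = 0
  · simp [hsi]
  have hle : Finsupp.single i 1 ≤ s := Finsupp.single_le_iff.2 (Nat.one_le_iff_ne_zero.2 hsi)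
  have hdeg : (s - Finsupp.single i 1).degree + 1 = s.degree := by
    simpa using congrArg Finsupp.degree (tsub_add_cancel_of_le hle)
  calc (monomial (s - Finsupp.single i 1) (g.coeff s * s i)).totalDegree
      ≤ (s - Finsupp.single i 1).degree := totalDegree_monomial_le _ _
    _ ≤ g.totalDegree - 1 := Nat.le_sub_one_of_lt (hdeg.trans_le (le_totalDegree hs))

/-- The restriction `t ↦ g (w + t v)` of a polynomial `g` to the line through `w` in direction
`v`, as a univariate polynomial. -/
noncomputable def restrictLine (w v : σ → R) (g : MvPolynomial σ R) : Polynomial R :=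
  aeval (fun j => Polynomial.C (w j) + Polynomial.C (v j) * Polynomial.X) g

lemma eval_restrictLine (w v : σ → R) (g : MvPolynomial σ R) (t : R) :
    (restrictLine w v g).eval t = eval (fun j => w j + v j * t) g := by
  have h := comp_aeval_apply (fun j => Polynomial.C (w j) + Polynomial.C (v j) * Polynomial.X)
    (Polynomial.aeval t) g
  simpa [restrictLine, Polynomial.coe_aeval_eq_eval, aeval_eq_eval] using h

lemma natDegree_restrictLine_le (w v : σ → R) (g : MvPolynomial σ R) :
    (restrictLine w v g).natDegree ≤ g.totalDegree := by
  simpa [restrictLine] using aeval_natDegree_le (n := 1) g le_rfl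
    (fun j => Polynomial.C (w j) + Polynomial.C (v j) * Polynomial.X)
    (fun j => by compute_degree)

lemma derivative_restrictLine [Fintype σ] (w v : σ → R) (g : MvPolynomial σ R) :
    (restrictLine w v g).derivative =
      ∑ j, Polynomial.C (v j) * restrictLine w v (pderiv j g) := by
  classical
  induction g using MvPolynomial.induction_on with
  | C a => simp [restrictLine]
  | add p q hp hq => simp_all [restrictLine, mul_add, Finset.sum_add_distrib]
  | mul_X p i hp =>
    have hmul (p q : MvPolynomial σ R) :
        restrictLine w v (p * q) = restrictLine w v p * restrictLine w v q := map_mul _ p q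
    have hX : (restrictLine w v (X i)).derivative = Polynomial.C (v i) := by simp [restrictLine]
    have hsingle : ∑ j, Polynomial.C (v j) * restrictLine w v (pderiv j (X i)) =
        Polynomial.C (v i) := by
      rw [Finset.sum_eq_single i (fun j _ hj => by simp [restrictLine, hj.symm]) (by simp)]
      simp [restrictLine]
    have hleibniz (j : σ) : restrictLine w v (pderiv j (p * X i)) =
        restrictLine w v p * restrictLine w v (pderiv j (X i)) +
          restrictLine w v (pderiv j p) * restrictLine w v (X i) := by
      rw [Derivation.leibniz, smul_eq_mul, smul_eq_mul, mul_comm (X i), ← hmul, ← hmul]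
      exact map_add _ _ _
    simp only [hmul, Polynomial.derivative_mul, hX, hleibniz, mul_add, Finset.sum_add_distrib,
      hp, ← hsingle, Finset.sum_mul, Finset.mul_sum]
    rw [add_comm]
    congr! 2 <;> ring

lemma eval_restrictLine_update_zero_single [DecidableEq σ] (y : σ → R) (i : σ)
    (g : MvPolynomial σ R) (t : R) :
    (restrictLine (Function.update y i 0) (Pi.single i 1) g).eval t =
      eval (Function.update y i t) g := by
  rw [eval_restrictLine]
  congr 2 with j
  rcases eq_or_ne j i with rfl | hj <;> simp [*]

lemma derivative_restrictLine_single [Finite σ] [DecidableEq σ] (w : σ → R) (i : σ)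
    (g : MvPolynomial σ R) :
    (restrictLine w (Pi.single i 1) g).derivative =
      restrictLine w (Pi.single i 1) (pderiv i g) := by
  cases nonempty_fintype σ
  rw [derivative_restrictLine, Finset.sum_eq_single i (fun j _ hj => by simp [hj]) (by simp)]
  simp

end PolynomialsOnLines

section LogarithmicDerivative

open Polynomial

lemma norm_eval_derivative_le_of_forall_roots {𝕜 : Type*} [NormedField 𝕜] {F : 𝕜[X]}
    (hF : F.Splits) {z : 𝕜} {r : ℝ} (hr : 0 < r) (hz : ∀ a ∈ F.roots, r ≤ ‖z - a‖) :
    ‖F.derivative.eval z‖ ≤ F.natDegree / r * ‖F.eval z‖ := by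
  rcases eq_or_ne F 0 with rfl | hF0
  · simp
  have hne : F.eval z ≠ 0 := by
    intro h0
    have := hz z ((mem_roots hF0).2 h0)
    rw [sub_self, norm_zero] at this
    exact this.not_gt hr
  rw [← div_le_iff₀ (norm_pos_iff.2 hne), ← norm_div, hF.eval_derivative_div_eval_of_ne_zero hne]
  calc ‖(F.roots.map fun a => 1 / (z - a)).sum‖
      ≤ ((F.roots.map fun a => 1 / (z - a)).map norm).sum := norm_multiset_sum_le _
    _ ≤ F.roots.card • r⁻¹ := by
        rw [Multiset.map_map, ← Multiset.card_map]
        refine Multiset.sum_le_card_nsmul _ _ fun x hx => ?_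
        obtain ⟨a, ha, rfl⟩ := Multiset.mem_map.1 hx
        simpa using inv_anti₀ hr (hz a ha)
    _ ≤ F.natDegree / r := by
        rw [nsmul_eq_mul, div_eq_mul_inv]
        gcongr
        exact F.card_roots'

lemma volume_setOf_mul_abs_eval_lt_abs_eval_derivative_le (f : ℝ[X]) {K : ℝ} (hK : 0 < K) :
    volume {t : ℝ | K * |f.eval t| < |f.derivative.eval t|} ≤
      ENNReal.ofReal (2 * f.natDegree ^ 2 / K) := by
  rcases Nat.eq_zero_or_pos f.natDegree with hd | hd
  · have hempty : {t : ℝ | K * |f.eval t| < |f.derivative.eval t|} = ∅ := by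
      ext t
      simpa [derivative_of_natDegree_zero hd] using mul_nonneg hK.le (abs_nonneg (f.eval t))
    simp [hempty]
  set d : ℝ := (f.natDegree : ℝ)
  have hd' : 0 < d := Nat.cast_pos.2 hd
  set F : ℂ[X] := f.map (algebraMap ℝ ℂ) with hF
  have hFd : F.natDegree = f.natDegree := natDegree_map _
  have norm_eval_map (g : ℝ[X]) (t : ℝ) : ‖(g.map (algebraMap ℝ ℂ)).eval (t : ℂ)‖ = |g.eval t| := by
    rw [eval_map, ← Real.norm_eq_abs, ← Complex.norm_real]
    exact congrArg norm (eval₂_at_apply (algebraMap ℝ ℂ) t)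
  have hcover : {t : ℝ | K * |f.eval t| < |f.derivative.eval t|} ⊆
      ⋃ a ∈ F.roots.toFinset, Metric.closedBall a.re (d / K) := by
    intro t ht
    by_contra hfar
    simp only [Set.mem_iUnion, Multiset.mem_toFinset, not_exists, Metric.mem_closedBall,
      Real.dist_eq, not_le] at hfar
    have hle := norm_eval_derivative_le_of_forall_roots (IsAlgClosed.splits F) (z := t)
      (div_pos hd' hK) fun a ha => (hfar a ha).le.trans <| by
        simpa using Complex.abs_re_le_norm (t - a)
    rw [hF, derivative_map, norm_eval_map, norm_eval_map, ← hF, hFd, div_div_cancel₀ hd'.ne'] at hle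
    exact ht.not_ge hle
  calc volume {t : ℝ | K * |f.eval t| < |f.derivative.eval t|}
      ≤ ∑ a ∈ F.roots.toFinset, volume (Metric.closedBall a.re (d / K)) :=
        (measure_mono hcover).trans (measure_biUnion_finset_le _ _)
    _ = ENNReal.ofReal (F.roots.toFinset.card * (2 * (d / K))) := by
        simp only [Real.volume_closedBall, Finset.sum_const, nsmul_eq_mul]
        rw [ENNReal.ofReal_mul (Nat.cast_nonneg _), ENNReal.ofReal_natCast]
    _ ≤ ENNReal.ofReal (d * (2 * (d / K))) := by
        gcongr
        exact Nat.cast_le.2 (((Multiset.toFinset_card_le _).trans F.card_roots').trans_eq hFd)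
    _ = ENNReal.ofReal (2 * d ^ 2 / K) := by ring_nf

end LogarithmicDerivative

section Slices

variable {ι : Type*} [Fintype ι]

lemma measure_pi_le_mul_of_forall_slice_le [DecidableEq ι] {X : ι → Type*}
    [∀ i, MeasurableSpace (X i)] (μ : ∀ i, Measure (X i)) [∀ i, SigmaFinite (μ i)]
    {E F : Set (∀ i, X i)} (hE : MeasurableSet E) (hF : MeasurableSet F) (κ : ENNReal) (i : ι)
    (h : ∀ y, μ i (Function.update y i ⁻¹' E) ≤ κ * μ i (Function.update y i ⁻¹' F)) :
    Measure.pi μ E ≤ κ * Measure.pi μ F := by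
  have slice_indicator {S : Set (∀ i, X i)} (hS : MeasurableSet S) (c : ENNReal) (y) :
      ∫⁻ t, S.indicator (fun _ => c) (Function.update y i t) ∂μ i =
        c * μ i (Function.update y i ⁻¹' S) :=
    lintegral_indicator_const_comp (measurable_update y) hS c
  have hmarg : ∫⋯∫⁻_{i}, E.indicator (fun _ => 1) ∂μ ≤ ∫⋯∫⁻_{i}, F.indicator (fun _ => κ) ∂μ := by
    intro y
    simpa only [lmarginal_singleton, slice_indicator hE, slice_indicator hF, one_mul] using h y
  simpa only [lintegral_indicator_const hE, lintegral_indicator_const hF, one_mul] using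
    lintegral_le_of_lmarginal_le {i} (measurable_const.indicator hE)
      (measurable_const.indicator hF) hmarg

lemma volume_inter_closedBall_le_of_forall_slice_le [DecidableEq ι] {ρ c : ℝ} (hρ : 0 < ρ)
    {E : Set (ι → ℝ)} (hE : MeasurableSet E) (i : ι)
    (h : ∀ y, volume (Function.update y i ⁻¹' E) ≤ ENNReal.ofReal c) :
    volume (Metric.closedBall 0 ρ ∩ E) ≤
      ENNReal.ofReal (c / (2 * ρ)) * volume (Metric.closedBall (0 : ι → ℝ) ρ) := by
  refine measure_pi_le_mul_of_forall_slice_le _ (Metric.isClosed_closedBall.measurableSet.inter hE)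
    Metric.isClosed_closedBall.measurableSet _ i fun y => ?_
  set B := Metric.closedBall (0 : ι → ℝ) ρ
  by_cases hy : ∀ j ≠ i, |y j| ≤ ρ
  · have hslice : Function.update y i ⁻¹' B = Metric.closedBall 0 ρ := by
      ext t
      simp only [B, Set.mem_preimage, mem_closedBall_zero_iff, pi_norm_le_iff_of_nonneg hρ.le]
      refine ⟨fun ht => by simpa using ht i, fun ht j => ?_⟩
      rcases eq_or_ne j i with rfl | hj
      · simpa using ht
      · simpa [hj] using hy j hj
    calc volume (Function.update y i ⁻¹' (B ∩ E)) ≤ volume (Function.update y i ⁻¹' E) :=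
          measure_mono (Set.preimage_mono Set.inter_subset_right)
      _ ≤ ENNReal.ofReal (c / (2 * ρ)) * volume (Function.update y i ⁻¹' B) := by
          rw [hslice, Real.volume_closedBall, ← ENNReal.ofReal_mul' (by positivity),
            div_mul_cancel₀ _ (by positivity)]
          exact h y
  · have hslice : Function.update y i ⁻¹' (B ∩ E) = ∅ := by
      refine Set.eq_empty_of_forall_notMem fun t ht => hy fun j hj => ?_
      simpa [hj] using (pi_norm_le_iff_of_nonneg hρ.le).1 (mem_closedBall_zero_iff.1 ht.1) j
    simp [hslice]

end Slices

section TamePoints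

open MvPolynomial Metric

variable {σ : Type*}

/-- `w` is a `K`-tame point of `g` to depth `D`: up to order `D`, every iterated partial derivative
of `g` is at most `K` times as large at `w` as the derivative it is obtained from. For `D` at least
the degree of `g` this controls the whole Taylor expansion of `g` at `w` in terms of `g w`. -/
def IsTame (K : ℝ) : ℕ → MvPolynomial σ ℝ → (σ → ℝ) → Prop
  | 0, _, _ => True
  | D + 1, g, w => ∀ i, |eval w (pderiv i g)| ≤ K * |eval w g| ∧ IsTame K D (pderiv i g) w

variable [Fintype σ]

lemma exists_eval_sub_eval_eq_sum (g : MvPolynomial σ ℝ) (w x : σ → ℝ) :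
    ∃ y : σ → ℝ, (∀ i, |y i - w i| ≤ |x i - w i|) ∧
      eval x g - eval w g = ∑ i, (x i - w i) * eval y (pderiv i g) := by
  set f := restrictLine w (x - w) g with hf
  obtain ⟨t, ht, hslope⟩ := exists_hasDerivAt_eq_slope (fun t => f.eval t)
    (fun t => f.derivative.eval t) zero_lt_one f.continuous.continuousOn
    (fun t _ => f.hasDerivAt t)
  refine ⟨fun i => w i + (x - w) i * t, fun i => ?_, ?_⟩
  · rw [add_sub_cancel_left, abs_mul, abs_of_pos ht.1]
    exact mul_le_of_le_one_right (abs_nonneg _) ht.2.le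
  · simpa [hf, eval_restrictLine, derivative_restrictLine, Polynomial.eval_finsetSum] using
      hslope.symm

lemma IsTame.abs_eval_sub_eval_le {K s : ℝ} (hK : 0 ≤ K) {w : σ → ℝ} {D : ℕ}
    {g : MvPolynomial σ ℝ} (hg : g.totalDegree ≤ D) (hw : IsTame K D g w) {x : σ → ℝ}
    (hx : K * ∑ i, |x i - w i| ≤ s) :
    |eval x g - eval w g| ≤ ((1 + s) ^ D - 1) * |eval w g| := by
  have hs : 0 ≤ s := (by positivity : 0 ≤ K * ∑ i, |x i - w i|).trans hx
  induction D generalizing g x with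
  | zero =>
    rw [totalDegree_eq_zero_iff_eq_C.1 (Nat.le_zero.1 hg)]
    simp
  | succ D ih =>
    obtain ⟨y, hy, hmean⟩ := exists_eval_sub_eval_eq_sum g w x
    have hyx : K * ∑ i, |y i - w i| ≤ s :=
      (mul_le_mul_of_nonneg_left (Finset.sum_le_sum fun i _ => hy i) hK).trans hx
    have hpderiv (i : σ) : |eval y (pderiv i g)| ≤ (1 + s) ^ D * (K * |eval w g|) := by
      have hdeg := (totalDegree_pderiv_le i g).trans (Nat.sub_le_iff_le_add.2 hg)
      have hih := ih hdeg (hw i).2 hyx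
      calc |eval y (pderiv i g)| ≤ (1 + s) ^ D * |eval w (pderiv i g)| := by
            linarith [abs_sub_abs_le_abs_sub (eval y (pderiv i g)) (eval w (pderiv i g))]
        _ ≤ (1 + s) ^ D * (K * |eval w g|) := by gcongr; exact (hw i).1
    calc |eval x g - eval w g| ≤ ∑ i, |x i - w i| * |eval y (pderiv i g)| := by
          simpa only [hmean, abs_mul] using
            Finset.abs_sum_le_sum_abs (fun i => (x i - w i) * eval y (pderiv i g)) Finset.univ
      _ ≤ ∑ i, |x i - w i| * ((1 + s) ^ D * (K * |eval w g|)) := by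
          gcongr with i
          exact hpderiv i
      _ = (K * ∑ i, |x i - w i|) * ((1 + s) ^ D * |eval w g|) := by
          rw [← Finset.sum_mul]
          ring
      _ ≤ s * ((1 + s) ^ D * |eval w g|) := by gcongr
      _ = ((1 + s) ^ (D + 1) - (1 + s) ^ D) * |eval w g| := by ring
      _ ≤ ((1 + s) ^ (D + 1) - 1) * |eval w g| := by
          gcongr
          exact one_le_pow₀ (by linarith)

lemma volume_closedBall_inter_mul_abs_eval_lt_abs_eval_pderiv_le {ρ K : ℝ} (hρ : 0 < ρ)
    (hK : 0 < K) (g : MvPolynomial σ ℝ) (i : σ) :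
    volume (closedBall 0 ρ ∩ {w | K * |eval w g| < |eval w (pderiv i g)|}) ≤
      ENNReal.ofReal (g.totalDegree ^ 2 / K / ρ) * volume (closedBall (0 : σ → ℝ) ρ) := by
  classical
  have hmeas : MeasurableSet {w : σ → ℝ | K * |eval w g| < |eval w (pderiv i g)|} :=
    measurableSet_lt (continuous_const.mul (MvPolynomial.continuous_eval g).abs).measurable
      (MvPolynomial.continuous_eval _).abs.measurable
  have hslice (y : σ → ℝ) :
      volume (Function.update y i ⁻¹' {w | K * |eval w g| < |eval w (pderiv i g)|}) ≤
        ENNReal.ofReal (2 * g.totalDegree ^ 2 / K) := by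
    set f := restrictLine (Function.update y i 0) (Pi.single i 1) g with hf
    calc volume (Function.update y i ⁻¹' {w | K * |eval w g| < |eval w (pderiv i g)|})
        = volume {t : ℝ | K * |f.eval t| < |f.derivative.eval t|} := by
          simp only [hf, derivative_restrictLine_single, eval_restrictLine_update_zero_single]
          rfl
      _ ≤ ENNReal.ofReal (2 * f.natDegree ^ 2 / K) :=
          volume_setOf_mul_abs_eval_lt_abs_eval_derivative_le f hK
      _ ≤ ENNReal.ofReal (2 * g.totalDegree ^ 2 / K) := by
          gcongr
          exact natDegree_restrictLine_le _ _ g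
  refine (volume_inter_closedBall_le_of_forall_slice_le hρ hmeas i hslice).trans_eq ?_
  congr 2
  field_simp

lemma exists_volume_closedBall_inter_not_isTame_le (σ : Type*) [Fintype σ] {ρ : ℝ} (hρ : 0 < ρ)
    (D : ℕ) :
    ∃ β : ℝ, 0 ≤ β ∧ ∀ K : ℝ, 0 < K → ∀ g : MvPolynomial σ ℝ, g.totalDegree ≤ D →
      volume (closedBall 0 ρ ∩ {w | ¬ IsTame K D g w}) ≤
        ENNReal.ofReal (β / K) * volume (closedBall (0 : σ → ℝ) ρ) := by
  induction D with
  | zero => exact ⟨0, le_rfl, fun K _ g _ => by simp [IsTame]⟩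
  | succ D ih =>
    obtain ⟨β, hβ, ih⟩ := ih
    refine ⟨Fintype.card σ * ((D + 1) ^ 2 / ρ + β), by positivity, fun K hK g hg => ?_⟩
    set B := closedBall (0 : σ → ℝ) ρ
    have hcover : B ∩ {w | ¬ IsTame K (D + 1) g w} ⊆
        ⋃ i, B ∩ {w | K * |eval w g| < |eval w (pderiv i g)|} ∪
          B ∩ {w | ¬ IsTame K D (pderiv i g) w} := by
      rintro w ⟨hwB, hw⟩
      obtain ⟨i, hi⟩ := not_forall.1 hw
      rw [not_and_or, not_le] at hi
      exact Set.mem_iUnion.2 ⟨i, hi.imp (⟨hwB, ·⟩) (⟨hwB, ·⟩)⟩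
    have hpiece (i : σ) :
        volume (B ∩ {w | K * |eval w g| < |eval w (pderiv i g)|} ∪
          B ∩ {w | ¬ IsTame K D (pderiv i g) w}) ≤
          ENNReal.ofReal ((D + 1) ^ 2 / K / ρ + β / K) * volume B := by
      have hdeg := (totalDegree_pderiv_le i g).trans (Nat.sub_le_iff_le_add.2 hg)
      rw [ENNReal.ofReal_add (by positivity) (by positivity), add_mul]
      refine (measure_union_le _ _).trans (add_le_add ?_ (ih K hK _ hdeg))
      refine (volume_closedBall_inter_mul_abs_eval_lt_abs_eval_pderiv_le hρ hK g i).trans ?_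
      gcongr
      exact_mod_cast hg
    calc volume (B ∩ {w | ¬ IsTame K (D + 1) g w})
        ≤ ∑ _ : σ, ENNReal.ofReal ((D + 1) ^ 2 / K / ρ + β / K) * volume B :=
          (measure_mono hcover).trans <|
            (measure_iUnion_fintype_le _ _).trans (Finset.sum_le_sum fun i _ => hpiece i)
      _ = ENNReal.ofReal (Fintype.card σ * ((D + 1) ^ 2 / ρ + β) / K) * volume B := by
          rw [Finset.sum_const, Finset.card_univ, nsmul_eq_mul, ← mul_assoc,
            ← ENNReal.ofReal_natCast, ← ENNReal.ofReal_mul (Nat.cast_nonneg _)]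
          congr 2
          field_simp

end TamePoints

section DiffuseVectors

open Metric

variable {Ω ι : Type*} [MeasurableSpace Ω] [Fintype ι]

/-- A random vector `Q` in `ℝ^ι` is `(ε, N)`-diffuse if each sup-norm ball of radius `ε` has
probability at most `ε ^ card ι * N`. This is the small-ball half of `IsDiffuseSet`, for random
vectors that need not be polynomial. -/
structure IsDiffuse (P : Measure Ω) (ε N : ℝ) (Q : Ω → ι → ℝ) : Prop where
  measurable : Measurable Q
  measure_preimage_closedBall_le :
    ∀ a, P (Q ⁻¹' closedBall a ε) ≤ ENNReal.ofReal (ε ^ Fintype.card ι * N)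

lemma measurableSet_setOf_mem_inter_closedBall {Q : Ω → ι → ℝ} (hQ : Measurable Q)
    {V : Set (ι → ℝ)} (hV : MeasurableSet V) (ε : ℝ) :
    MeasurableSet {z : Ω × (ι → ℝ) | z.2 ∈ V ∩ closedBall (Q z.1) ε} :=
  (measurable_snd hV).inter <|
    measurableSet_le (measurable_snd.dist (hQ.comp measurable_fst)) measurable_const

namespace IsDiffuse

variable {P : Measure Ω} {ε N : ℝ} {Q : Ω → ι → ℝ}

lemma lintegral_volume_inter_closedBall_le [SFinite P] (hQ : IsDiffuse P ε N Q)
    {V : Set (ι → ℝ)} (hV : MeasurableSet V) :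
    ∫⁻ x, volume (V ∩ closedBall (Q x) ε) ∂P ≤
      ENNReal.ofReal (ε ^ Fintype.card ι * N) * volume V := by
  set S : Set (Ω × (ι → ℝ)) := {z | z.2 ∈ V ∩ closedBall (Q z.1) ε}
  have hS : MeasurableSet S := measurableSet_setOf_mem_inter_closedBall hQ.measurable hV ε
  have hfiber (w : ι → ℝ) : P ((·, w) ⁻¹' S) ≤
      V.indicator (fun _ => ENNReal.ofReal (ε ^ Fintype.card ι * N)) w := by
    by_cases hw : w ∈ V
    · rw [Set.indicator_of_mem hw]
      refine (measure_mono fun x hx => ?_).trans (hQ.measure_preimage_closedBall_le w)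
      exact mem_closedBall'.2 hx.2
    · have hempty : (·, w) ⁻¹' S = ∅ := Set.eq_empty_of_forall_notMem fun x hx => hw hx.1
      simp [hempty]
  calc ∫⁻ x, volume (V ∩ closedBall (Q x) ε) ∂P
      = ∫⁻ w, P ((·, w) ⁻¹' S) := by
        rw [← Measure.prod_apply_symm hS, Measure.prod_apply hS]
        rfl
    _ ≤ ∫⁻ w, V.indicator (fun _ => ENNReal.ofReal (ε ^ Fintype.card ι * N)) w :=
        lintegral_mono hfiber
    _ = ENNReal.ofReal (ε ^ Fintype.card ι * N) * volume V := lintegral_indicator_const hV _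

lemma measure_le_of_closedBall_subset [SFinite P] (hQ : IsDiffuse P ε N Q) (hε : 0 < ε)
    {A : Set Ω} {V : Set (ι → ℝ)} (hA : ∀ x ∈ A, closedBall (Q x) ε ⊆ V) :
    P A ≤ ENNReal.ofReal N * volume V := by
  set k := Fintype.card ι
  set V' := toMeasurable volume V
  have hV' : MeasurableSet V' := measurableSet_toMeasurable _ _
  have hball : ∀ x ∈ A, ENNReal.ofReal (ε ^ k) ≤ volume (V' ∩ closedBall (Q x) ε) := fun x hx =>
    calc ENNReal.ofReal (ε ^ k) ≤ ENNReal.ofReal ((2 * ε) ^ k) := by gcongr; linarith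
      _ = volume (closedBall (Q x) ε) := (Real.volume_pi_closedBall _ hε.le).symm
      _ ≤ volume (V' ∩ closedBall (Q x) ε) :=
          measure_mono fun w hw => ⟨subset_toMeasurable _ _ (hA x hx hw), hw⟩
  have hε' : ENNReal.ofReal (ε ^ k) ≠ 0 := by simpa using pow_pos hε k
  refine (ENNReal.mul_le_mul_iff_right hε' ENNReal.ofReal_ne_top).1 ?_
  calc ENNReal.ofReal (ε ^ k) * P A
      ≤ ENNReal.ofReal (ε ^ k) *
          P {x | ENNReal.ofReal (ε ^ k) ≤ volume (V' ∩ closedBall (Q x) ε)} := by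
        gcongr
        exact hball
    _ ≤ ∫⁻ x, volume (V' ∩ closedBall (Q x) ε) ∂P :=
        mul_meas_ge_le_lintegral (measurable_measure_prodMk_left
          (measurableSet_setOf_mem_inter_closedBall hQ.measurable hV' ε)) _
    _ ≤ ENNReal.ofReal (ε ^ k * N) * volume V' :=
        hQ.lintegral_volume_inter_closedBall_le hV'
    _ = ENNReal.ofReal (ε ^ k) * (ENNReal.ofReal N * volume V) := by
        rw [measure_toMeasurable, ENNReal.ofReal_mul (pow_nonneg hε.le k), mul_assoc]

lemma pos [SFinite P] [NeZero P] (hQ : IsDiffuse P ε N Q) (hε : 0 < ε) : 0 < N := by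
  by_contra! hN
  have huniv := hQ.measure_le_of_closedBall_subset hε fun x (_ : x ∈ Set.univ) =>
    Set.subset_univ (closedBall (Q x) ε)
  rw [ENNReal.ofReal_of_nonpos hN, zero_mul, nonpos_iff_eq_zero] at huniv
  exact NeZero.ne P (Measure.measure_univ_eq_zero.1 huniv)

variable [IsProbabilityMeasure P] {R ρ : ℝ}

lemma measureReal_norm_le_sub_le (hQ : IsDiffuse P ε N Q) (hε : 0 < ε) (hρ : R + ε ≤ ρ)
    {S : Set (ι → ℝ)} {b : ℝ} (hb : 0 ≤ b)
    (hS : volume (closedBall 0 ρ ∩ Sᶜ) ≤ ENNReal.ofReal b) :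
    P.real {x | ‖Q x‖ ≤ R} - N * b ≤
      P.real {x | ∃ w ∈ closedBall 0 ρ ∩ S, dist w (Q x) ≤ ε} := by
  set A := {x | closedBall (Q x) ε ⊆ closedBall 0 ρ ∩ Sᶜ}
  have hN := (hQ.pos hε).le
  have hA : P.real A ≤ N * b := by
    refine ENNReal.toReal_le_of_le_ofReal (by positivity) ?_
    rw [ENNReal.ofReal_mul hN]
    exact (hQ.measure_le_of_closedBall_subset hε fun x hx => hx).trans (by gcongr)
  have hcover : {x | ‖Q x‖ ≤ R} ⊆ A ∪ {x | ∃ w ∈ closedBall 0 ρ ∩ S, dist w (Q x) ≤ ε} := by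
    intro x (hx : ‖Q x‖ ≤ R)
    rw [Set.mem_union, or_iff_not_imp_left]
    intro hxA
    obtain ⟨w, hw, hwS⟩ := Set.not_subset.1 hxA
    have hwρ : w ∈ closedBall 0 ρ :=
      closedBall_subset_closedBall' (by rw [dist_zero_right]; linarith) hw
    exact ⟨w, ⟨hwρ, by_contra fun h => hwS ⟨hwρ, h⟩⟩, hw⟩
  linarith [(measureReal_mono (μ := P) hcover).trans (measureReal_union_le _ _)]

lemma measureReal_norm_le_le (hQ : IsDiffuse P ε N Q) (hε : 0 < ε) (hρ₀ : 0 ≤ ρ)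
    (hρ : R + ε ≤ ρ) : P.real {x | ‖Q x‖ ≤ R} ≤ N * (2 * ρ) ^ Fintype.card ι := by
  have h := hQ.measureReal_norm_le_sub_le hε hρ (S := ∅) (b := (2 * ρ) ^ Fintype.card ι)
    (by positivity) (by simp [Real.volume_pi_closedBall _ hρ₀])
  simpa using h

lemma measureReal_norm_le_le_of_apply_eq (hQ : IsDiffuse P ε N Q) (hε : 0 < ε) (hρ₀ : 0 < ρ)
    (hρ : R + ε ≤ ρ) {i : ι} {a : ℝ} (ha : ∀ x, Q x i = a) :
    P.real {x | ‖Q x‖ ≤ R} ≤ N * (ε / ρ * (2 * ρ) ^ Fintype.card ι) := by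
  classical
  have hslab : volume (closedBall (0 : ι → ℝ) ρ ∩ {w | w i ∈ closedBall a ε}) ≤
      ENNReal.ofReal (ε / ρ * (2 * ρ) ^ Fintype.card ι) := by
    refine (volume_inter_closedBall_le_of_forall_slice_le (c := 2 * ε) hρ₀
      (measurable_pi_apply i isClosed_closedBall.measurableSet) i fun y => ?_).trans_eq ?_
    · rw [← Real.volume_closedBall (a := a)]
      exact measure_mono fun t ht => by simpa using ht
    · rw [Real.volume_pi_closedBall _ hρ₀.le, ← ENNReal.ofReal_mul (by positivity),
        mul_div_mul_left _ _ two_ne_zero]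
  have h := hQ.measureReal_norm_le_sub_le hε hρ (S := {w | w i ∈ closedBall a ε}ᶜ)
    (b := ε / ρ * (2 * ρ) ^ Fintype.card ι) (by positivity) (by rwa [compl_compl])
  have hempty : {x | ∃ w ∈ closedBall 0 ρ ∩ {w | w i ∈ closedBall a ε}ᶜ, dist w (Q x) ≤ ε} = ∅ :=
    Set.eq_empty_of_forall_notMem fun x ⟨w, hw, hwx⟩ =>
      hw.2 (ha x ▸ (dist_le_pi_dist w (Q x) i).trans hwx)
  rwa [hempty, measureReal_empty, sub_nonpos] at h

end IsDiffuse

lemma measureReal_lt_norm_le_of_integral_sq_le_one {P : Measure Ω} [IsFiniteMeasure P]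
    {Q : Ω → ι → ℝ} (hint : ∀ i, Integrable (fun x => Q x i ^ 2) P)
    (hQ : ∀ i, ∫ x, Q x i ^ 2 ∂P ≤ 1) {R : ℝ} (hR : 0 < R) :
    P.real {x | R < ‖Q x‖} ≤ Fintype.card ι / R ^ 2 := by
  have hcover : {x | R < ‖Q x‖} ⊆ ⋃ i, {x | R ^ 2 ≤ Q x i ^ 2} := by
    intro x (hx : R < ‖Q x‖)
    by_contra hcon
    simp only [Set.mem_iUnion, Set.mem_ofPred_eq, not_exists, not_le] at hcon
    exact hx.not_ge <| (pi_norm_le_iff_of_nonneg hR.le).2 fun i =>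
      (abs_lt_of_sq_lt_sq (hcon i) hR.le).le
  have hmarkov (i : ι) : P.real {x | R ^ 2 ≤ Q x i ^ 2} ≤ 1 / R ^ 2 := by
    rw [le_div_iff₀' (by positivity)]
    exact (mul_meas_ge_le_integral_of_nonneg (.of_forall fun x => sq_nonneg _) (hint i) _).trans
      (hQ i)
  calc P.real {x | R < ‖Q x‖} ≤ ∑ i, P.real {x | R ^ 2 ≤ Q x i ^ 2} :=
        (measureReal_mono hcover).trans (measureReal_iUnion_fintype_le _)
    _ ≤ ∑ _ : ι, 1 / R ^ 2 := Finset.sum_le_sum fun i _ => hmarkov i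
    _ = Fintype.card ι / R ^ 2 := by simp [div_eq_mul_inv]

end DiffuseVectors

section GaussianNorm

open MvPolynomial

variable {n : ℕ}

instance isProbabilityMeasure_stdGaussian (n : ℕ) :
    IsProbabilityMeasure (_root_.stdGaussian n) := by
  unfold _root_.stdGaussian
  infer_instance

lemma integrable_eval_stdGaussian (g : MvPolynomial (Fin n) ℝ) :
    Integrable (fun x => eval x g) (_root_.stdGaussian n) := by
  simp only [eval_eq']
  refine integrable_finsetSum _ fun s _ => Integrable.const_mul ?_ _
  refine Integrable.fintype_prod (f := fun i (t : ℝ) => t ^ s i) fun i => ?_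
  have hmoment := (memLp_id_gaussianReal (μ := 0) (v := 1) (s i)).integrable_norm_pow'
  refine (integrable_norm_iff (measurable_id.pow_const _).aestronglyMeasurable).1 ?_
  simpa using hmoment

lemma integrable_eval_sq_stdGaussian (g : MvPolynomial (Fin n) ℝ) :
    Integrable (fun x => eval x g ^ 2) (_root_.stdGaussian n) :=
  (integrable_eval_stdGaussian (g ^ 2)).congr (.of_forall fun x => map_pow (eval x) g 2)

lemma gaussL2_nonneg (p : MvPolynomial (Fin n) ℝ) : 0 ≤ gaussL2 p := Real.sqrt_nonneg _

lemma gaussL2_le_of_forall_abs_eval_le {p q : MvPolynomial (Fin n) ℝ} {c : ℝ} (hc : 0 ≤ c)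
    (h : ∀ x, |eval x p| ≤ c * |eval x q|) : gaussL2 p ≤ c * gaussL2 q := by
  rw [gaussL2, gaussL2, ← Real.sqrt_sq hc, ← Real.sqrt_mul (sq_nonneg c), ← integral_const_mul]
  refine Real.sqrt_le_sqrt <| integral_mono (integrable_eval_sq_stdGaussian p)
    ((integrable_eval_sq_stdGaussian q).const_mul _) fun x => ?_
  have hx := pow_le_pow_left₀ (abs_nonneg _) (h x) 2
  rwa [mul_pow, sq_abs, sq_abs] at hx

lemma le_two_mul_gaussL2_of_half_le {p : MvPolynomial (Fin n) ℝ} {c : ℝ}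
    (h : 1 / 2 ≤ (_root_.stdGaussian n).real {x | c ≤ |eval x p|}) : c ≤ 2 * gaussL2 p := by
  rcases le_total c 0 with hc | hc
  · exact hc.trans (mul_nonneg zero_le_two (gaussL2_nonneg p))
  have hmarkov := mul_meas_ge_le_integral_of_nonneg (.of_forall fun x => sq_nonneg (eval x p))
    (integrable_eval_sq_stdGaussian p) (c ^ 2)
  have hsub : {x | c ≤ |eval x p|} ⊆ {x | c ^ 2 ≤ eval x p ^ 2} := fun x (hx : c ≤ _) => by
    simpa using pow_le_pow_left₀ hc hx 2
  have hhalf := h.trans (measureReal_mono hsub)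
  rw [← div_le_iff₀' zero_lt_two]
  refine Real.le_sqrt_of_sq_le ?_
  nlinarith [sq_nonneg c]

end GaussianNorm

section Comparison

open MvPolynomial Metric

lemma exists_one_add_sum_abs_sub_le_eval (σ : Type*) [Fintype σ] {ρ : ℝ} (hρ : 0 ≤ ρ) :
    ∃ B : MvPolynomial σ ℝ, ∀ w ∈ closedBall (0 : σ → ℝ) ρ, ∀ x,
      1 + ∑ i, |x i - w i| ≤ eval x B := by
  refine ⟨1 + ∑ i, (X i ^ 2 + C (1 + ρ)), fun w hw x => ?_⟩
  simp only [map_add, map_one, map_sum, map_pow, eval_X, eval_C]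
  gcongr with i
  have hwi : |w i| ≤ ρ := (pi_norm_le_iff_of_nonneg hρ).1 (mem_closedBall_zero_iff.1 hw) i
  nlinarith [abs_sub (x i) (w i), sq_nonneg (|x i| - 1), sq_abs (x i)]

lemma exists_gaussL2_le_mul_abs_eval_of_isTame (m D : ℕ) {ρ : ℝ} (hρ : 0 ≤ ρ) :
    ∃ S : ℝ, 0 < S ∧ ∀ K : ℝ, 1 ≤ K → ∀ h : MvPolynomial (Fin m) ℝ, h.totalDegree ≤ D →
      ∀ w ∈ closedBall 0 ρ, IsTame K D h w → gaussL2 h ≤ S * K ^ D * |eval w h| := by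
  obtain ⟨B, hB⟩ := exists_one_add_sum_abs_sub_le_eval (Fin m) hρ
  refine ⟨gaussL2 (B ^ D) + 1, by linarith [gaussL2_nonneg (B ^ D)], fun K hK h hh w hwρ hw => ?_⟩
  have hpoint (x : Fin m → ℝ) : |eval x h| ≤ K ^ D * |eval w h| * |eval x (B ^ D)| := by
    have hsum : 0 ≤ ∑ i, |x i - w i| := Finset.sum_nonneg fun i _ => abs_nonneg _
    have hBx := hB w hwρ x
    calc |eval x h| ≤ (1 + K * ∑ i, |x i - w i|) ^ D * |eval w h| := by
          linarith [abs_sub_abs_le_abs_sub (eval x h) (eval w h),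
            hw.abs_eval_sub_eval_le (zero_le_one.trans hK) hh (x := x) le_rfl]
      _ ≤ (K * eval x B) ^ D * |eval w h| := by
          gcongr
          nlinarith
      _ = K ^ D * |eval w h| * |eval x (B ^ D)| := by
          rw [map_pow, abs_pow, abs_of_nonneg (by linarith : 0 ≤ eval x B)]
          ring
  calc gaussL2 h ≤ K ^ D * |eval w h| * gaussL2 (B ^ D) :=
        gaussL2_le_of_forall_abs_eval_le (by positivity) hpoint
    _ ≤ K ^ D * |eval w h| * (gaussL2 (B ^ D) + 1) := by gcongr; linarith
    _ = (gaussL2 (B ^ D) + 1) * K ^ D * |eval w h| := by ring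

lemma IsTame.abs_eval_le_two_mul {σ : Type*} [Fintype σ] {K ε : ℝ} (hK : 0 ≤ K) {w z : σ → ℝ}
    {D : ℕ} {g : MvPolynomial σ ℝ} (hg : g.totalDegree ≤ D) (hw : IsTame K D g w)
    (hwz : dist w z ≤ ε) (hsmall : D * (K * (Fintype.card σ * ε)) ≤ 1 / 3) :
    |eval w g| ≤ 2 * |eval z g| := by
  set s := K * (Fintype.card σ * ε) with hs
  have hε : 0 ≤ ε := dist_nonneg.trans hwz
  have hsum : K * ∑ i, |z i - w i| ≤ s := by
    rw [hs, ← nsmul_eq_mul, ← Finset.card_univ]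
    gcongr
    exact Finset.sum_le_card_nsmul _ _ _ fun i _ => by
      simpa only [Real.dist_eq, abs_sub_comm] using (dist_le_pi_dist w z i).trans hwz
  have hpow : (1 + s) ^ D ≤ 3 / 2 :=
    calc (1 + s) ^ D ≤ Real.exp s ^ D := by
          gcongr
          linarith [Real.add_one_le_exp s]
      _ = Real.exp (D * s) := (Real.exp_nat_mul s D).symm
      _ ≤ Real.exp (1 / 3) := Real.exp_le_exp.2 hsmall
      _ ≤ 1 / (1 - 1 / 3) := Real.exp_bound_div_one_sub_of_interval (by norm_num) (by norm_num)
      _ = 3 / 2 := by norm_num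
  have hdiff := hw.abs_eval_sub_eval_le hK hg hsum
  rw [abs_sub_comm] at hdiff
  nlinarith [abs_sub_abs_le_abs_sub (eval w g) (eval z g), abs_nonneg (eval w g)]

end Comparison

lemma mul_lt_of_mul_log_inv_lt {ε N c : ℝ} (hε : 0 < ε) (hε2 : ε ≤ 1 / 2) (hc : 0 < c)
    (h : N * ε * Real.log (1 / ε) < c * Real.log 2) : N * ε < c := by
  have hlog2 : 0 < Real.log 2 := Real.log_pos one_lt_two
  have hlog : Real.log 2 ≤ Real.log (1 / ε) :=
    Real.log_le_log two_pos (by rw [le_div_iff₀ hε]; linarith)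
  by_contra! hN
  nlinarith [mul_le_mul hN hlog hlog2.le (hc.le.trans hN)]

section DiffuseDecompositions

open MvPolynomial Metric

lemma exists_half_le_measureReal_isTame (ι : Type*) [Fintype ι] (D : ℕ) {R : ℝ}
    (hR : 0 ≤ R) :
    ∃ κ : ℝ, 0 < κ ∧ ∀ {Ω : Type*} [MeasurableSpace Ω] {P : Measure Ω} [IsProbabilityMeasure P]
      {ε N : ℝ} {Q : Ω → ι → ℝ}, 0 < ε → ε ≤ 1 → IsDiffuse P ε N Q →
      3 / 4 ≤ P.real {x | ‖Q x‖ ≤ R} → 1 ≤ κ * N ∧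
        ∀ h : MvPolynomial ι ℝ, h.totalDegree ≤ D →
          1 / 2 ≤ P.real {x | ∃ w ∈ closedBall 0 (R + 1) ∩ {w | IsTame (κ * N) D h w},
            dist w (Q x) ≤ ε} := by
  have hρ : 0 < R + 1 := by linarith
  obtain ⟨β, hβ, hvol⟩ := exists_volume_closedBall_inter_not_isTame_le ι hρ D
  set V := (2 * (R + 1)) ^ Fintype.card ι with hV
  have hV0 : 0 < V := by positivity
  refine ⟨(4 * β + 2) * V, by positivity, fun {Ω _ P _ ε N Q} hε hε1 hQ hcore => ?_⟩
  have hN := hQ.pos hε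
  have hNV : 3 / 4 ≤ N * V := hcore.trans (hQ.measureReal_norm_le_le hε hρ.le (by linarith))
  refine ⟨by nlinarith, fun h hh => ?_⟩
  set K := (4 * β + 2) * V * N with hK
  have hK0 : 0 < K := by positivity
  have hbad : N * (β / K * V) ≤ 1 / 4 := by
    rw [hK, show N * (β / ((4 * β + 2) * V * N) * V) = β / (4 * β + 2) by field_simp,
      div_le_div_iff₀ (by positivity) (by norm_num)]
    linarith
  have hvolK : volume (closedBall 0 (R + 1) ∩ {w | IsTame K D h w}ᶜ) ≤
      ENNReal.ofReal (β / K * V) := by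
    rw [ENNReal.ofReal_mul (by positivity), hV, ← Real.volume_pi_closedBall 0 hρ.le]
    exact hvol K hK0 h hh
  linarith [hQ.measureReal_norm_le_sub_le hε (by linarith : R + ε ≤ R + 1)
    (by positivity : 0 ≤ β / K * V) hvolK]

lemma exists_half_le_measureReal_gaussL2_le (m D : ℕ) {R : ℝ} (hR : 0 ≤ R) :
    ∃ c₀ C : ℝ, 0 < c₀ ∧ 0 < C ∧
      ∀ {Ω : Type*} [MeasurableSpace Ω] {P : Measure Ω} [IsProbabilityMeasure P] {ε N : ℝ}
        {Q : Ω → Fin m → ℝ}, 0 < ε → ε ≤ 1 → N * ε < c₀ → IsDiffuse P ε N Q →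
        3 / 4 ≤ P.real {x | ‖Q x‖ ≤ R} → ∀ h : MvPolynomial (Fin m) ℝ, h.totalDegree ≤ D →
          1 / 2 ≤ P.real {x | gaussL2 h ≤ C * N ^ D * |eval (Q x) h|} := by
  obtain ⟨κ, hκ, htame⟩ := exists_half_le_measureReal_isTame (Fin m) D hR
  obtain ⟨S, hS, hbound⟩ :=
    exists_gaussL2_le_mul_abs_eval_of_isTame m D (by linarith : 0 ≤ R + 1)
  refine ⟨1 / (3 * (D * κ * m + 1)), 2 * S * κ ^ D, by positivity, by positivity, ?_⟩
  intro Ω _ P _ ε N Q hε hε1 hNε hQ hcore h hh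
  obtain ⟨hK, hhalf⟩ := htame hε hε1 hQ hcore
  have hN := hQ.pos hε
  have hsmall : D * (κ * N * (Fintype.card (Fin m) * ε)) ≤ 1 / 3 := by
    rw [lt_div_iff₀ (by positivity)] at hNε
    rw [Fintype.card_fin]
    nlinarith [mul_pos hN hε]
  refine (hhalf h hh).trans (measureReal_mono ?_)
  rintro x ⟨w, ⟨hwρ, hw⟩, hwx⟩
  calc gaussL2 h ≤ S * (κ * N) ^ D * |eval w h| := hbound _ hK h hh w hwρ hw
    _ ≤ S * (κ * N) ^ D * (2 * |eval (Q x) h|) := by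
        gcongr
        exact IsTame.abs_eval_le_two_mul (by positivity) hh hw hwx hsmall
    _ = 2 * S * κ ^ D * N ^ D * |eval (Q x) h| := by ring

variable {n m d : ℕ} {ε N : ℝ} {q : Fin m → MvPolynomial (Fin n) ℝ}

lemma IsDiffuseSet.isDiffuse (hε : 0 ≤ ε) (hq : IsDiffuseSet m ε N q) :
    IsDiffuse (_root_.stdGaussian n) ε N fun x i => eval x (q i) where
  measurable := measurable_pi_lambda _ fun i => (MvPolynomial.continuous_eval (q i)).measurable
  measure_preimage_closedBall_le a := by
    convert hq.2 a using 2
    · ext x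
      simp [dist_pi_le_iff hε, Real.dist_eq]
    · rw [Fintype.card_fin]

lemma IsDiffuseSet.three_quarters_le_measureReal_norm_le (hq : IsDiffuseSet m ε N q) :
    3 / 4 ≤ (_root_.stdGaussian n).real {x | ‖fun i => eval x (q i)‖ ≤ m + 2} := by
  have htail := measureReal_lt_norm_le_of_integral_sq_le_one (Q := fun x i => eval x (q i))
    (fun i => integrable_eval_sq_stdGaussian (q i)) hq.1 (by positivity : (0 : ℝ) < m + 2)
  have hquarter : (Fintype.card (Fin m) : ℝ) / (m + 2) ^ 2 ≤ 1 / 4 := by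
    rw [Fintype.card_fin, div_le_div_iff₀ (by positivity) (by norm_num)]
    nlinarith [sq_nonneg (m : ℝ)]
  have hmeas : MeasurableSet {x | ‖fun i => eval x (q i)‖ ≤ (m : ℝ) + 2} :=
    measurableSet_le (measurable_pi_lambda _ fun i =>
      (MvPolynomial.continuous_eval (q i)).measurable).norm measurable_const
  have hcompl := probReal_compl_eq_one_sub (μ := _root_.stdGaussian n) hmeas
  simp only [Set.compl_ofPred, not_le] at hcompl
  linarith

-- A constant `q i` would confine the random vector to a slab of width `O(ε)`.
lemma IsDiffuseSet.totalDegree_pos (hε : 0 < ε) (hε1 : ε ≤ 1) (hq : IsDiffuseSet m ε N q)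
    (hNε : N * ε * (2 * (m + 3)) ^ m < 1 / 2) (i : Fin m) : 0 < (q i).totalDegree := by
  refine Nat.pos_of_ne_zero fun hdeg => ?_
  obtain ⟨a, ha⟩ : ∃ a, q i = C a := ⟨_, totalDegree_eq_zero_iff_eq_C.1 hdeg⟩
  have hslab := hq.three_quarters_le_measureReal_norm_le.trans <|
    (hq.isDiffuse hε.le).measureReal_norm_le_le_of_apply_eq hε (by positivity : (0 : ℝ) < m + 3)
      (by linarith) (i := i) (a := a) fun x => by simp [ha]
  have hN := ((hq.isDiffuse hε.le).pos hε).le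
  have hdiv : N * (ε / (m + 3) * (2 * (m + 3)) ^ m) ≤ N * ε * (2 * (m + 3)) ^ m := by
    rw [mul_assoc]
    gcongr
    exact div_le_self hε.le (by linarith [(Nat.cast_nonneg m : (0 : ℝ) ≤ m)])
  rw [Fintype.card_fin] at hslab
  linarith

variable {p : MvPolynomial (Fin n) ℝ} {h : MvPolynomial (Fin m) ℝ}

lemma IsDecomposition.totalDegree_le (hp : IsDecomposition d p h q)
    (hq : ∀ i, 0 < (q i).totalDegree) : h.totalDegree ≤ d := by
  refine Finset.sup_le fun a ha => le_trans ?_ (hp.2 a ha)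
  rw [Finsupp.sum_fintype _ _ fun _ => rfl]
  exact Finset.sum_le_sum fun i _ => Nat.le_mul_of_pos_right _ (hq i)

lemma IsDecomposition.eval_eq (hp : IsDecomposition d p h q) (x : Fin n → ℝ) :
    eval (fun i => eval x (q i)) h = eval x p := by
  simpa [aeval_eq_eval, ← hp.1] using (comp_aeval_apply q (aeval x) h).symm

theorem h_small_lemma_general (m d : ℕ) :
    ∃ c₀ C : ℝ, 0 < c₀ ∧ 0 < C ∧
      ∀ (n : ℕ) (ε N : ℝ), 0 < ε → ε ≤ 1 → N * ε < c₀ →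
        ∀ (p : MvPolynomial (Fin n) ℝ) (h : MvPolynomial (Fin m) ℝ)
          (q : Fin m → MvPolynomial (Fin n) ℝ),
          IsDecomposition d p h q → IsDiffuseSet m ε N q →
          gaussL2 h ≤ C * N ^ d * gaussL2 p := by
  obtain ⟨c₁, C, hc₁, hC, hmain⟩ :=
    exists_half_le_measureReal_gaussL2_le m d (by positivity : (0 : ℝ) ≤ m + 2)
  have hV : (0 : ℝ) < (2 * (m + 3)) ^ m := by positivity
  refine ⟨min c₁ (1 / 2 / (2 * (m + 3)) ^ m), 2 * C, by positivity, by positivity, ?_⟩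
  intro n ε N hε hε1 hNε p h q hp hq
  rw [lt_min_iff, lt_div_iff₀ hV] at hNε
  have hQ := hq.isDiffuse hε.le
  have hh : h.totalDegree ≤ d := hp.totalDegree_le (hq.totalDegree_pos hε hε1 hNε.2)
  have hhalf := hmain hε hε1 hNε.1 hQ hq.three_quarters_le_measureReal_norm_le h hh
  have hCN : 0 < C * N ^ d := mul_pos hC (pow_pos (hQ.pos hε) d)
  simp only [hp.eval_eq, ← div_le_iff₀' hCN] at hhalf
  calc gaussL2 h ≤ C * N ^ d * (2 * gaussL2 p) :=
        (div_le_iff₀' hCN).1 (le_two_mul_gaussL2_of_half_le hhalf)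
    _ = 2 * C * N ^ d * gaussL2 p := by ring

end DiffuseDecompositions

/-- There are `c₀ > 0` and `C > 0` depending only on `m` and `d` such that for any
`(ε, N)`-diffuse decomposition `(h, q₁, …, q_m)` of a degree-`d` polynomial `p` with
`0 < ε < 1/2` and `N ε log(1/ε) < c₀`, one has `|h|₂ ≤ C N^d |p|₂`. -/
theorem h_small_lemma (m d : ℕ) :
    ∃ (c₀ C : ℝ), 0 < c₀ ∧ 0 < C ∧
      ∀ (n : ℕ) (ε N : ℝ), 0 < ε → ε < 1 / 2 →
        N * ε * Real.log (1 / ε) < c₀ →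
        ∀ (p : MvPolynomial (Fin n) ℝ) (h : MvPolynomial (Fin m) ℝ)
          (q : Fin m → MvPolynomial (Fin n) ℝ),
          p.totalDegree ≤ d → IsDecomposition d p h q → IsDiffuseSet m ε N q →
          gaussL2 h ≤ C * N ^ d * gaussL2 p := by
  obtain ⟨c₀, C, hc₀, hC, hmain⟩ := h_small_lemma_general m d
  refine ⟨c₀ * Real.log 2, C, mul_pos hc₀ (Real.log_pos one_lt_two), hC, ?_⟩
  exact fun n ε N hε hε2 hNε p h q _ => hmain n ε N hε (by linarith)
    (mul_lt_of_mul_log_inv_lt hε hε2.le hc₀ hNε) p h q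
end
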